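/- arXiv:2509.16947 — 2 statements merged into one kernel-verified Lean document; each statement's English description precedes it below -/
import Mathlib

section
/- Let n be a positive integer and, for each nonzero integer m, let K_m = {g ∈ GL_n(ℤ) : g ≡ I_n (mod m)} be the principal congruence subgroup of level m. Let G be a soluble-by-finite subgroup of GL_n(ℤ), i.e., G has a solvable subgroup of finite index. Then every finite-index subgroup H of G contains G ∩ K_m for some nonzero integer m. -/
/-!
Let `Γ` act on a lattice `L` by `ρ : Γ →* Module.End ℤ L`. By induction on the rank of `L`, every
subgroup of finite index containing `ker ρ` contains some `levelSubgroup ρ m`, the elements acting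
as `1 + m f` (`IsSolubleByFinite.congruenceProperty`).

*Reducible case.* If a subgroup of finite index stabilizes a proper nonzero pure submodule `W`, the
full stabilizer of `W` contains a congruence subgroup (`exists_levelSubgroup_le_of_isPure`), which
may replace `Γ`. The property passes to extensions (`CongruenceProperty.extension`), which reduces
the claim to the actions on `W` and `L / W`, settled by induction, and to the elements acting
trivially on both, which form an abelian unipotent group (`CongruenceProperty.of_unipotent`).

*Strongly irreducible case.* If every subgroup of finite index acts irreducibly over `ℚ`, a solvable
subgroup of finite index, once shrunk so that its centralizer in `End L` cannot grow any more, acts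
by commuting endomorphisms (`commute_of_isSolvable`, a form of a theorem of Malcev). The double
centralizer of its image is a domain, i.e. an order in a number field, and the elements of `Γ`
acting through it contain a congruence subgroup. On that subgroup the claim is a theorem of
Chevalley (`exists_forall_dvd_exists_eq_pow`): in the units of a number field, the `k`-th powers
contain all units congruent to `1` modulo a suitable integer.

*Units.* Units close enough to `1` are `n`-th powers modulo every prime not dividing `n`. For such a
unit `u`, all decomposition groups of `K(ζ_n, u ^ (1 / n))` over `K(ζ_n)` at these primes are
trivial. An extension in which almost all primes split completely is trivial
(`eq_one_of_stabilizer_eq_bot`), because the Dedekind zeta functions of both fields have simple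
poles at `1`. Hence `K(ζ_n, u ^ (1 / n)) = K(ζ_n)` is abelian over `K`, and an argument of Schinzel
shows that `u ^ w` is an `n`-th power, where `w` is the number of roots of unity of `K`.
-/

/-- The principal congruence subgroup of level `m` in `GL_n(ℤ)`: matrices congruent to the
identity modulo `m` (every entry of `g - 1` is divisible by `m`). -/
def congruenceSubgroup (n : ℕ) (m : ℤ) : Subgroup (Matrix.GeneralLinearGroup (Fin n) ℤ) where
  carrier := {g | ∀ i j : Fin n, m ∣ ((g : Matrix (Fin n) (Fin n) ℤ) - 1) i j}
  one_mem' := by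
    intro i j
    simp
  mul_mem' := by
    intro a b ha hb i j
    have key : ((a : Matrix (Fin n) (Fin n) ℤ) * b - 1)
        = ((a : Matrix (Fin n) (Fin n) ℤ) - 1) * b + ((b : Matrix (Fin n) (Fin n) ℤ) - 1) := by
      noncomm_ring
    show m ∣ ((↑(a * b) : Matrix (Fin n) (Fin n) ℤ) - 1) i j
    rw [Units.val_mul, key, Matrix.add_apply]
    refine dvd_add ?_ (hb i j)
    rw [Matrix.mul_apply]
    exact Finset.dvd_sum fun k _ => Dvd.dvd.mul_right (ha i k) _
  inv_mem' := by
    intro g hg i j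
    have hmul : (↑g⁻¹ : Matrix (Fin n) (Fin n) ℤ) * (g : Matrix (Fin n) (Fin n) ℤ) = 1 := by
      rw [← Units.val_mul, inv_mul_cancel, Units.val_one]
    have key : ((↑g⁻¹ : Matrix (Fin n) (Fin n) ℤ) - 1)
        = (↑g⁻¹ : Matrix (Fin n) (Fin n) ℤ) * (1 - (g : Matrix (Fin n) (Fin n) ℤ)) := by
      rw [Matrix.mul_sub, mul_one, hmul]
    show m ∣ ((↑g⁻¹ : Matrix (Fin n) (Fin n) ℤ) - 1) i j
    rw [key, Matrix.mul_apply]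
    refine Finset.dvd_sum fun k _ => Dvd.dvd.mul_left ?_ _
    have := hg k j
    rw [Matrix.sub_apply] at this
    have h' : ((1 : Matrix (Fin n) (Fin n) ℤ) - g) k j
        = -(((g : Matrix (Fin n) (Fin n) ℤ) - 1) k j) := by
      simp [Matrix.sub_apply]
    rw [h']
    exact dvd_neg.mpr (hg k j)

/-! ### Zeta functions and completely split primes -/

section NumberFields

open IsDedekindDomain NumberField UniqueFactorizationMonoid Filter Topology
open scoped Pointwise

section PrimeFactors

lemma prod_map_prime_injective {R ι : Type*} [CommMonoidWithZero R]
    [UniqueFactorizationMonoid R] [NormalizationMonoid R] [Subsingleton Rˣ] {P : ι → R}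
    (hP : ∀ i, Prime (P i)) (hinj : Function.Injective P) :
    Function.Injective fun s : Multiset ι => (s.map P).prod := by
  intro s t hst
  have hfactors (u : Multiset ι) : normalizedFactors (u.map P).prod = u.map P :=
    normalizedFactors_prod_of_prime fun p hp => by
      obtain ⟨i, -, rfl⟩ := Multiset.mem_map.1 hp
      exact hP i
  exact Multiset.map_injective hinj <| by
    rw [← hfactors s, ← hfactors t]; exact congrArg normalizedFactors hst

variable {R : Type*} [CommRing R]

/-- The nonzero ideals divisible by none of the primes in `T`: they index the zeta function with
the Euler factors at `T` removed. -/
def idealsPrimeTo (T : Finset (HeightOneSpectrum R)) : Set (Ideal R) :=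
  {I | I ≠ ⊥ ∧ ∀ v ∈ T, ¬ v.asIdeal ∣ I}

lemma idealsPrimeTo_empty : idealsPrimeTo (∅ : Finset (HeightOneSpectrum R)) = {⊥}ᶜ := by
  ext I
  simp [idealsPrimeTo]

lemma idealsPrimeTo_subset [DecidableEq (HeightOneSpectrum R)]
    (T : Finset (HeightOneSpectrum R)) (v : HeightOneSpectrum R) :
    idealsPrimeTo T ⊆ idealsPrimeTo (insert v T) ∪ (v.asIdeal * ·) '' idealsPrimeTo T := by
  intro I hI
  by_cases hv : v.asIdeal ∣ I
  · obtain ⟨J, rfl⟩ := hv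
    exact Or.inr ⟨J, ⟨right_ne_zero_of_mul hI.1, fun w hw hJ => hI.2 w hw (hJ.mul_left _)⟩, rfl⟩
  · refine Or.inl ⟨hI.1, fun w hw => ?_⟩
    rcases Finset.mem_insert.1 hw with rfl | hw
    exacts [hv, hI.2 w hw]

lemma exists_multiset_prod_eq [IsDedekindDomain R] {T : Finset (HeightOneSpectrum R)}
    (I : idealsPrimeTo T) :
    ∃ F : Multiset {v // v ∉ T}, (F.map fun v => v.1.asIdeal).prod = I := by
  have hfactor (Q : {Q // Q ∈ normalizedFactors I.1}) : ∃ v : {v // v ∉ T}, v.1.asIdeal = Q := by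
    have hQ : Prime Q.1 := prime_of_normalized_factor _ Q.2
    exact ⟨⟨⟨Q, Ideal.isPrime_of_prime hQ, hQ.ne_zero⟩,
      fun hT => I.2.2 _ hT (dvd_of_mem_normalizedFactors Q.2)⟩, rfl⟩
  choose g hg using hfactor
  refine ⟨(normalizedFactors I.1).attach.map g, ?_⟩
  simp only [Multiset.map_map, Function.comp_def, hg, Multiset.attach_map_val]
  exact Ideal.prod_normalizedFactors_eq_self I.2.1

lemma eq_of_disjSum_eq {α β : Type*} {s s' : Multiset α} {t t' : Multiset β}
    (h : s.disjSum t = s'.disjSum t') : s = s' ∧ t = t' := by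
  classical
  constructor <;> ext a
  · simpa [Multiset.disjSum, Multiset.count_map_eq_count' _ _ Sum.inl_injective] using
      congrArg (Multiset.count (Sum.inl a)) h
  · simpa [Multiset.disjSum, Multiset.count_map_eq_count' _ _ Sum.inr_injective] using
      congrArg (Multiset.count (Sum.inr a)) h

end PrimeFactors

section Zeta

/-- The term `N(I)^{-s}` of the Dedekind zeta function; the zero ideal contributes `0` when
`s ≠ 0`. -/
noncomputable def zetaTerm (K : Type*) [Field K] [NumberField K] (s : ℝ) (I : Ideal (𝓞 K)) :
    ENNReal :=
  ENNReal.ofReal ((Ideal.absNorm I : ℝ) ^ (-s))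

variable {K : Type*} [Field K] [NumberField K]

lemma zetaTerm_mul (s : ℝ) (I J : Ideal (𝓞 K)) :
    zetaTerm K s (I * J) = zetaTerm K s I * zetaTerm K s J := by
  unfold zetaTerm
  rw [← ENNReal.ofReal_mul (by positivity), map_mul, Nat.cast_mul,
    Real.mul_rpow (by positivity) (by positivity)]

lemma zetaTerm_bot {s : ℝ} (hs : s ≠ 0) : zetaTerm K s ⊥ = 0 := by
  simp [zetaTerm, Real.zero_rpow (neg_ne_zero.2 hs)]

lemma tsum_zetaTerm_eq_tsum_nat (s : ℝ) :
    ∑' I, zetaTerm K s I = ∑' n : ℕ, ENNReal.ofReal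
      (Nat.card {I : Ideal (𝓞 K) // Ideal.absNorm I = n} * (n : ℝ) ^ (-s)) := by
  rw [← (Equiv.sigmaFiberEquiv fun I : Ideal (𝓞 K) => Ideal.absNorm I).tsum_eq,
    ENNReal.tsum_sigma']
  refine tsum_congr fun n => ?_
  have : Finite {I : Ideal (𝓞 K) // Ideal.absNorm I = n} := Ideal.finite_setOfPred_absNorm_eq n
  have hterm (I : {I : Ideal (𝓞 K) // Ideal.absNorm I = n}) :
      zetaTerm K s (Equiv.sigmaFiberEquiv (fun I : Ideal (𝓞 K) => Ideal.absNorm I) ⟨n, I⟩)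
        = ENNReal.ofReal ((n : ℝ) ^ (-s)) := by
    simp [zetaTerm, I.2]
  rw [tsum_congr hterm, ENNReal.tsum_const, ENNReal.ofReal_mul (by positivity),
    ENNReal.ofReal_natCast, ENat.card_eq_coe_natCard, ENat.toENNReal_coe]

lemma dedekindZeta_eq_tsum_nat {s : ℝ} (hs : s ≠ 0) :
    dedekindZeta K s = ∑' n : ℕ,
      ((Nat.card {I : Ideal (𝓞 K) // Ideal.absNorm I = n} * (n : ℝ) ^ (-s) : ℝ) : ℂ) := by
  unfold dedekindZeta LSeries
  refine tsum_congr fun n => ?_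
  rw [LSeries.term_def]
  split_ifs with hn
  · simp [hn, Real.zero_rpow (neg_ne_zero.2 hs)]
  · rw [Real.rpow_neg (by positivity), div_eq_mul_inv]
    push_cast
    rw [Complex.ofReal_cpow (by positivity), Complex.ofReal_natCast]

/-- The nonvanishing hypothesis provides the convergence of the series, since a divergent series
has the junk value `0`. -/
lemma tsum_zetaTerm_eq {s : ℝ} (hs : s ≠ 0) (h : dedekindZeta K s ≠ 0) :
    ∑' I, zetaTerm K s I = ENNReal.ofReal (dedekindZeta K s).re := by
  rw [dedekindZeta_eq_tsum_nat hs] at h ⊢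
  have hsum : Summable fun n : ℕ =>
      (Nat.card {I : Ideal (𝓞 K) // Ideal.absNorm I = n} : ℝ) * (n : ℝ) ^ (-s) := by
    by_contra hdiv
    exact h (tsum_eq_zero_of_not_summable (by rwa [Complex.summable_ofReal]))
  rw [← Complex.ofReal_tsum, Complex.ofReal_re,
    ENNReal.ofReal_tsum_of_nonneg (fun n => by positivity) hsum, tsum_zetaTerm_eq_tsum_nat]

lemma tendsto_sub_one_mul_dedekindZeta_re (K : Type*) [Field K] [NumberField K] :
    Tendsto (fun s : ℝ ↦ (s - 1) * (dedekindZeta K s).re) (𝓝[>] 1)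
      (𝓝 (dedekindZeta_residue K)) := by
  refine ((Complex.continuous_re.tendsto _).comp
    (tendsto_sub_one_mul_dedekindZeta_nhdsGT K)).congr fun s => ?_
  rw [Function.comp_apply, ← Complex.ofReal_one, ← Complex.ofReal_sub, Complex.re_ofReal_mul]

lemma exists_bounds_tsum_zetaTerm (K : Type*) [Field K] [NumberField K] :
    ∃ c C : ℝ, 0 < c ∧ 0 < C ∧ ∀ᶠ s : ℝ in 𝓝[>] 1,
      ENNReal.ofReal (c / (s - 1)) ≤ ∑' I, zetaTerm K s I ∧
      ∑' I, zetaTerm K s I ≤ ENNReal.ofReal (C / (s - 1)) := by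
  have hr : 0 < dedekindZeta_residue K := dedekindZeta_residue_pos K
  have hlim := tendsto_sub_one_mul_dedekindZeta_re K
  refine ⟨dedekindZeta_residue K / 2, 2 * dedekindZeta_residue K, by positivity, by positivity, ?_⟩
  filter_upwards [hlim.eventually (lt_mem_nhds (half_lt_self hr)),
    hlim.eventually (gt_mem_nhds (lt_two_mul_self hr)), self_mem_nhdsWithin] with s hlow hup hs
  have hpos : 0 < s - 1 := sub_pos.2 hs
  have hne : dedekindZeta K s ≠ 0 := by
    intro h0
    rw [h0, Complex.zero_re, mul_zero] at hlow
    linarith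
  rw [tsum_zetaTerm_eq (by linarith) hne]
  constructor <;> apply ENNReal.ofReal_le_ofReal
  · rw [div_le_iff₀' hpos]; exact hlow.le
  · rw [le_div_iff₀' hpos]; exact hup.le

lemma zetaTerm_prime_le (v : HeightOneSpectrum (𝓞 K)) {s : ℝ} (hs : 1 ≤ s) :
    zetaTerm K s v.asIdeal ≤ 2⁻¹ := by
  have htwo : (2 : ℝ) ≤ Ideal.absNorm v.asIdeal := by
    have h0 : Ideal.absNorm v.asIdeal ≠ 0 := mt Ideal.absNorm_eq_zero_iff.1 v.ne_bot
    have h1 : Ideal.absNorm v.asIdeal ≠ 1 := mt Ideal.absNorm_eq_one_iff.1 v.isPrime.ne_top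
    exact_mod_cast (by omega : 2 ≤ Ideal.absNorm v.asIdeal)
  have hinv : (2⁻¹ : ENNReal) = ENNReal.ofReal 2⁻¹ := by
    rw [ENNReal.ofReal_inv_of_pos two_pos, ENNReal.ofReal_ofNat]
  rw [hinv]
  refine ENNReal.ofReal_le_ofReal ?_
  rw [Real.rpow_neg (by positivity)]
  refine inv_anti₀ two_pos (htwo.trans ?_)
  exact Real.self_le_rpow_of_one_le (by linarith) hs

lemma tsum_idealsPrimeTo_le_insert [DecidableEq (HeightOneSpectrum (𝓞 K))] {s : ℝ} (hs : 1 ≤ s)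
    (T : Finset (HeightOneSpectrum (𝓞 K))) (v : HeightOneSpectrum (𝓞 K))
    (hfin : ∑' I : idealsPrimeTo T, zetaTerm K s I ≠ ⊤) :
    ∑' I : idealsPrimeTo T, zetaTerm K s I
      ≤ 2 * ∑' I : idealsPrimeTo (insert v T), zetaTerm K s I := by
  set Z := ∑' I : idealsPrimeTo T, zetaTerm K s I
  set Z' := ∑' I : idealsPrimeTo (insert v T), zetaTerm K s I
  have hmultiples : ∑' I : ((v.asIdeal * ·) '' idealsPrimeTo T : Set (Ideal (𝓞 K))), zetaTerm K s I
      ≤ 2⁻¹ * Z := by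
    rw [tsum_image (fun I => zetaTerm K s I) (mul_right_injective₀ v.ne_bot).injOn]
    simp_rw [zetaTerm_mul, ENNReal.tsum_mul_left]
    gcongr
    exact zetaTerm_prime_le v hs
  have hsplit : 2⁻¹ * Z + 2⁻¹ * Z ≤ Z' + 2⁻¹ * Z := by
    rw [← add_mul, ENNReal.inv_two_add_inv_two, one_mul]
    calc Z ≤ _ := ENNReal.tsum_mono_subtype _ (idealsPrimeTo_subset T v)
      _ ≤ _ := ENNReal.tsum_union_le _ _ _
      _ ≤ Z' + 2⁻¹ * Z := by gcongr
  have hhalf : 2⁻¹ * Z ≤ Z' :=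
    (ENNReal.add_le_add_iff_right (ENNReal.mul_ne_top (by simp) hfin)).1 hsplit
  rwa [← ENNReal.div_le_iff' two_ne_zero ENNReal.ofNat_ne_top, ENNReal.div_eq_inv_mul]

lemma tsum_zetaTerm_le_idealsPrimeTo {s : ℝ} (hs : 1 ≤ s) (hfin : ∑' I, zetaTerm K s I ≠ ⊤)
    (T : Finset (HeightOneSpectrum (𝓞 K))) :
    ∑' I, zetaTerm K s I ≤ 2 ^ T.card * ∑' I : idealsPrimeTo T, zetaTerm K s I := by
  classical
  induction T using Finset.induction_on with
  | empty =>
    rw [idealsPrimeTo_empty, ← ENNReal.summable.tsum_add_tsum_compl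
      (s := {(⊥ : Ideal (𝓞 K))}) ENNReal.summable]
    simp [zetaTerm_bot (show s ≠ 0 by linarith)]
  | insert v T hv ih =>
    refine ih.trans ?_
    rw [Finset.card_insert_of_notMem hv, pow_succ, mul_assoc]
    gcongr
    exact tsum_idealsPrimeTo_le_insert hs T v <| ne_top_of_le_ne_top hfin <|
      ENNReal.tsum_comp_le_tsum_of_injective Subtype.val_injective _

end Zeta

section Split

variable {L M : Type*} [Field L] [NumberField L] [Field M] [NumberField M]

lemma absNorm_prod_map_eq {ι : Type*} {P : ι → Ideal (𝓞 M)} {Q : ι → Ideal (𝓞 L)}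
    (h : ∀ i, Ideal.absNorm (P i) = Ideal.absNorm (Q i)) (s : Multiset ι) :
    Ideal.absNorm (s.map P).prod = Ideal.absNorm (s.map Q).prod := by
  simp only [map_multiset_prod, Multiset.map_map, Function.comp_def, h]

/-- The pairs of ideals of `L` prime to `T` embed, multiplicatively for the norm, into the ideals
of `M`: factor both ideals and replace their prime factors by means of `P`. -/
lemma tsum_idealsPrimeTo_sq_le (T : Finset (HeightOneSpectrum (𝓞 L)))
    (P : {v // v ∉ T} ⊕ {v // v ∉ T} → HeightOneSpectrum (𝓞 M)) (hP : Function.Injective P)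
    (hnorm : ∀ x, Ideal.absNorm (P x).asIdeal = Ideal.absNorm (Sum.elim id id x).1.asIdeal)
    (s : ℝ) :
    (∑' I : idealsPrimeTo T, zetaTerm L s I) * (∑' I : idealsPrimeTo T, zetaTerm L s I)
      ≤ ∑' J, zetaTerm M s J := by
  choose F hF using exists_multiset_prod_eq (T := T)
  let Φ (p : idealsPrimeTo T × idealsPrimeTo T) : Ideal (𝓞 M) :=
    (((F p.1).disjSum (F p.2)).map fun x => (P x).asIdeal).prod
  have hΦ : Function.Injective Φ := by
    rintro ⟨I, J⟩ ⟨I', J'⟩ h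
    have hsum := prod_map_prime_injective (fun x => (P x).prime)
      (fun x y hxy => hP (HeightOneSpectrum.ext hxy)) h
    obtain ⟨hFI, hFJ⟩ := eq_of_disjSum_eq hsum
    exact Prod.ext (Subtype.ext (by rw [← hF, hFI, hF])) (Subtype.ext (by rw [← hF, hFJ, hF]))
  have hterm (p : idealsPrimeTo T × idealsPrimeTo T) :
      zetaTerm M s (Φ p) = zetaTerm L s p.1 * zetaTerm L s p.2 := by
    rw [← zetaTerm_mul, zetaTerm, zetaTerm, absNorm_prod_map_eq hnorm]
    simp [Multiset.disjSum, Function.comp_def, hF]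
  calc _ = ∑' p : idealsPrimeTo T × idealsPrimeTo T, zetaTerm L s p.1 * zetaTerm L s p.2 := by
        rw [ENNReal.tsum_prod (f := fun I J : idealsPrimeTo T => zetaTerm L s I * zetaTerm L s J)]
        simp_rw [ENNReal.tsum_mul_left, ENNReal.tsum_mul_right]
    _ = ∑' p, zetaTerm M s (Φ p) := tsum_congr fun p => (hterm p).symm
    _ ≤ _ := ENNReal.tsum_comp_le_tsum_of_injective hΦ _

lemma sq_le_of_ofReal_div_le {c C k x : ℝ} {Z : ENNReal} (hc : 0 ≤ c) (hC : 0 ≤ C) (hk : 0 ≤ k)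
    (hx : 0 < x) (hlow : ENNReal.ofReal (c / x) ≤ ENNReal.ofReal k * Z)
    (hup : Z * Z ≤ ENNReal.ofReal (C / x)) : c ^ 2 ≤ k ^ 2 * C * x := by
  have h : ENNReal.ofReal ((c / x) ^ 2) ≤ ENNReal.ofReal (k ^ 2 * (C / x)) := by
    calc ENNReal.ofReal ((c / x) ^ 2) = ENNReal.ofReal (c / x) ^ 2 :=
          ENNReal.ofReal_pow (by positivity) 2
      _ ≤ (ENNReal.ofReal k * Z) ^ 2 := by gcongr
      _ = ENNReal.ofReal (k ^ 2) * (Z * Z) := by rw [mul_pow, ENNReal.ofReal_pow hk, sq Z]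
      _ ≤ ENNReal.ofReal (k ^ 2) * ENNReal.ofReal (C / x) := by gcongr
      _ = _ := (ENNReal.ofReal_mul (by positivity)).symm
  rw [ENNReal.ofReal_le_ofReal_iff (by positivity), div_pow, div_le_iff₀ (by positivity)] at h
  calc c ^ 2 ≤ _ := h
    _ = k ^ 2 * C * x := by field_simp

/-- Otherwise `ζ_L ^ 2 = O(ζ_M)` near `1`, while both functions have simple poles there. -/
lemma not_injective_of_absNorm_eq (T : Finset (HeightOneSpectrum (𝓞 L)))
    (P : {v // v ∉ T} ⊕ {v // v ∉ T} → HeightOneSpectrum (𝓞 M))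
    (hnorm : ∀ x, Ideal.absNorm (P x).asIdeal = Ideal.absNorm (Sum.elim id id x).1.asIdeal) :
    ¬ Function.Injective P := by
  intro hP
  obtain ⟨c, _, hc, -, hL⟩ := exists_bounds_tsum_zetaTerm L
  obtain ⟨_, C, -, hC, hM⟩ := exists_bounds_tsum_zetaTerm M
  set k : ℝ := 2 ^ T.card
  have hnear : ∀ᶠ s : ℝ in 𝓝[>] 1, k ^ 2 * C * (s - 1) < c ^ 2 := by
    have hcont : ContinuousAt (fun s : ℝ => k ^ 2 * C * (s - 1)) 1 := by fun_prop
    exact nhdsWithin_le_nhds (hcont.eventually_lt continuousAt_const (by simpa using by positivity))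
  obtain ⟨s, ⟨hlow, hup⟩, ⟨-, hM⟩, hsmall, hs⟩ :=
    (hL.and (hM.and (hnear.and self_mem_nhdsWithin))).exists
  have hle := tsum_zetaTerm_le_idealsPrimeTo (le_of_lt hs)
    (ne_top_of_le_ne_top ENNReal.ofReal_ne_top hup) T
  have hk : (2 : ENNReal) ^ T.card = ENNReal.ofReal k := by
    rw [ENNReal.ofReal_pow two_pos.le, ENNReal.ofReal_ofNat]
  exact hsmall.not_ge <| sq_le_of_ofReal_div_le hc.le hC.le (by positivity) (sub_pos.2 hs)
    (hlow.trans (hk ▸ hle)) ((tsum_idealsPrimeTo_sq_le T P hP hnorm s).trans hM)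

end Split

section Decomposition

lemma exists_under_eq {A B : Type*} [CommRing A] [IsDomain A] [CommRing B] [IsDomain B]
    [Algebra A B] [Algebra.IsIntegral A B] [FaithfulSMul A B] (v : HeightOneSpectrum A)
    [v.asIdeal.IsMaximal] : ∃ w : HeightOneSpectrum B, w.under A = v := by
  obtain ⟨P, hP, hPv⟩ := Ideal.exists_maximal_ideal_liesOver_of_isIntegral (S := B) v.asIdeal
  exact ⟨⟨P, hP.isPrime, Ideal.ne_bot_of_liesOver_of_ne_bot v.ne_bot P⟩,
    HeightOneSpectrum.ext hPv.over.symm⟩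

variable {L M : Type*} [Field L] [NumberField L] [Field M] [NumberField M]
  [Algebra L M] [IsGalois L M]

lemma absNorm_under_of_stabilizer_eq_bot (w : HeightOneSpectrum (𝓞 M))
    (hw : MulAction.stabilizer Gal(M/L) w.asIdeal = ⊥) :
    Ideal.absNorm w.asIdeal = Ideal.absNorm (w.under (𝓞 L)).asIdeal := by
  set v := w.under (𝓞 L)
  have : w.asIdeal.LiesOver v.asIdeal := ⟨rfl⟩
  have : Finite (𝓞 L ⧸ v.asIdeal) := Ideal.finiteQuotientOfFreeOfNeBot _ v.ne_bot
  have : Finite v.asIdeal.ResidueField :=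
    Finite.of_surjective _ (Ideal.bijective_algebraMap_quotient_residueField _).2
  have hcard := Ideal.card_stabilizer_eq_card_inertia_mul_finrank (G := Gal(M/L))
    v.asIdeal w.asIdeal
  rw [hw, Subgroup.card_bot] at hcard
  rw [← Ideal.absNorm_pow_inertiaDeg v.asIdeal w.asIdeal,
    Nat.eq_one_of_mul_eq_one_left hcard.symm, pow_one]

lemma eq_one_of_stabilizer_eq_bot {a : 𝓞 L} (ha : a ≠ 0)
    (h : ∀ w : HeightOneSpectrum (𝓞 M), algebraMap (𝓞 L) (𝓞 M) a ∉ w.asIdeal →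
      MulAction.stabilizer Gal(M/L) w.asIdeal = ⊥) (τ : Gal(M/L)) : τ = 1 := by
  by_contra hτ
  have hfin : {v : HeightOneSpectrum (𝓞 L) | v.asIdeal ∣ Ideal.span {a}}.Finite :=
    Ideal.finite_factors (by simpa using ha)
  have hmem (v : {v // v ∉ hfin.toFinset}) : a ∉ v.1.asIdeal := fun hav => v.2 <| by
    simpa [Ideal.dvd_span_singleton] using hav
  have hover (v : HeightOneSpectrum (𝓞 L)) :
      ∃ w : HeightOneSpectrum (𝓞 M), w.under (𝓞 L) = v :=
    have := v.isMaximal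
    exists_under_eq v
  choose P hP using hover
  let Q (v : {v // v ∉ hfin.toFinset}) : HeightOneSpectrum (𝓞 M) :=
    ⟨τ • (P v.1).asIdeal, inferInstance, fun hbot => (P v.1).ne_bot <|
      (smul_eq_iff_eq_inv_smul τ).1 hbot |>.trans (Ideal.smul_bot _)⟩
  have hQ (v) : (Q v).under (𝓞 L) = v.1 :=
    (HeightOneSpectrum.ext (Ideal.under_smul (𝓞 L) _ τ)).trans (hP v.1)
  have hstab (w : HeightOneSpectrum (𝓞 M)) (v : {v // v ∉ hfin.toFinset})
      (hw : w.under (𝓞 L) = v) : MulAction.stabilizer Gal(M/L) w.asIdeal = ⊥ :=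
    h w fun haw => hmem v <| by rw [← hw]; exact haw
  refine not_injective_of_absNorm_eq hfin.toFinset (Sum.elim (fun v => P v.1) Q) ?_ ?_
  · rintro (v | v)
    · exact (absNorm_under_of_stabilizer_eq_bot _ (hstab _ v (hP v.1))).trans (by rw [hP]; rfl)
    · exact (absNorm_under_of_stabilizer_eq_bot _ (hstab _ v (hQ v))).trans (by rw [hQ]; rfl)
  · refine Function.Injective.sumElim (fun v v' hvv' => ?_) (fun v v' hvv' => ?_) ?_
    · exact Subtype.ext (by rw [← hP v.1, hvv', hP])
    · exact Subtype.ext (by rw [← hQ v, hvv', hQ])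
    · intro v v' hvv'
      obtain rfl : v = v' := Subtype.ext (by rw [← hP v.1, hvv', hQ])
      have : τ ∈ MulAction.stabilizer Gal(M/L) (P v.1).asIdeal :=
        (congrArg HeightOneSpectrum.asIdeal hvv').symm
      exact hτ (by simpa [hstab _ v (hP v.1)] using this)

end Decomposition

/-! ### Local and global powers -/

section Kummer

/-- `u` is an `n`-th power modulo every prime that does not divide `n u`. -/
def IsLocalPow {R : Type*} [CommRing R] (n : ℕ) (u : R) : Prop :=
  ∀ v : HeightOneSpectrum R, (n : R) * u ∉ v.asIdeal → ∃ t, u - t ^ n ∈ v.asIdeal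

lemma IsLocalPow.map {K L : Type*} [Field K] [NumberField K] [Field L] [NumberField L]
    [Algebra K L] {n : ℕ} {u : 𝓞 K} (hu : IsLocalPow n u) :
    IsLocalPow n (algebraMap (𝓞 K) (𝓞 L) u) := by
  intro w hw
  obtain ⟨t, ht⟩ := hu (w.under (𝓞 K)) fun hmem => hw <| by
    simpa [HeightOneSpectrum.under, Ideal.mem_comap] using hmem
  refine ⟨algebraMap (𝓞 K) (𝓞 L) t, ?_⟩
  simpa [HeightOneSpectrum.under, Ideal.mem_comap] using ht

lemma eq_of_pow_eq_pow_of_sub_mem {R : Type*} [CommRing R] [IsDomain R] {P : Ideal R} [P.IsPrime]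
    {n : ℕ} {x y : R} (hny : (n : R) * y ∉ P) (hpow : x ^ n = y ^ n) (hxy : x - y ∈ P) :
    x = y := by
  have hsum : (∑ i ∈ Finset.range n, x ^ i * y ^ (n - 1 - i)) * (x - y) = 0 := by
    rw [(Commute.all x y).geom_sum₂_mul, hpow, sub_self]
  refine sub_eq_zero.1 ((mul_eq_zero.1 hsum).resolve_left fun h0 => ?_)
  have hmod : Ideal.Quotient.mk P x = Ideal.Quotient.mk P y := Ideal.Quotient.eq.2 hxy
  have hderiv : (n : R) * y ^ (n - 1) ∈ P := by
    rw [← Ideal.Quotient.eq_zero_iff_mem]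
    simpa [hmod, geom_sum₂_self] using congrArg (Ideal.Quotient.mk P) h0
  rcases ‹P.IsPrime›.mem_or_mem hderiv with hn | hy
  · exact hny (P.mul_mem_right _ hn)
  · exact hny (P.mul_mem_left _ (‹P.IsPrime›.mem_of_pow_mem _ hy))

lemma smul_eq_of_pow_sub_pow_mem {G B : Type*} [Group G] [CommRing B] [IsDomain B]
    [MulSemiringAction G B] {P : Ideal B} [P.IsPrime] {n : ℕ} {ζ t z : B} {τ : G} (hn : n ≠ 0)
    (hζ : IsPrimitiveRoot ζ n) (hτP : τ • P = P) (hτζ : τ • ζ = ζ) (hτt : τ • t = t)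
    (hτz : τ • z ^ n = z ^ n) (hnz : (n : B) * z ∉ P) (ht : z ^ n - t ^ n ∈ P) : τ • z = z := by
  have : NeZero n := ⟨hn⟩
  obtain ⟨i, hi⟩ : ∃ i, z - ζ ^ i * t ∈ P := by
    rw [hζ.pow_sub_pow_eq_prod_sub_mul z t hn.bot_lt] at ht
    obtain ⟨η, hη, hmem⟩ := Ideal.IsPrime.prod_mem_iff.1 ht
    obtain ⟨i, -, rfl⟩ := hζ.eq_pow_of_pow_eq_one ((Polynomial.mem_nthRootsFinset hn.bot_lt 1).1 hη)
    exact ⟨i, hmem⟩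
  have hτi : τ • z - ζ ^ i * t ∈ P := by
    have := Ideal.smul_mem_pointwise_smul τ _ P hi
    rwa [hτP, smul_sub, smul_mul', smul_pow', hτζ, hτt] at this
  refine eq_of_pow_eq_pow_of_sub_mem hnz (by rw [← smul_pow', hτz]) ?_
  simpa using P.sub_mem hτi hi

open Polynomial in
lemma stabilizer_eq_bot_of_isLocalPow {L M : Type*} [Field L] [NumberField L] [Field M]
    [NumberField M] [Algebra L M] {n : ℕ} (hn : n ≠ 0) {ζ : L} (hζ : IsPrimitiveRoot ζ n) {u : 𝓞 L}
    (hu : IsLocalPow n u) [IsSplittingField L M (X ^ n - C (u : L))]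
    (w : HeightOneSpectrum (𝓞 M)) (hw : algebraMap (𝓞 L) (𝓞 M) (n * u) ∉ w.asIdeal) :
    MulAction.stabilizer Gal(M/L) w.asIdeal = ⊥ := by
  have hcoe : Function.Injective (fun x : 𝓞 M => (x : M)) := RingOfIntegers.coe_injective
  obtain ⟨ζ, rfl⟩ : ∃ η : 𝓞 L, (η : L) = ζ := ⟨⟨ζ, hζ.isIntegral hn.bot_lt⟩, rfl⟩
  have hζM : IsPrimitiveRoot (algebraMap (𝓞 L) (𝓞 M) ζ) n :=
    (hζ.of_map_of_injective (f := algebraMap (𝓞 L) L)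
      RingOfIntegers.coe_injective).map_of_injective (FaithfulSMul.algebraMap_injective _ _)
  obtain ⟨t, ht⟩ := hu (w.under (𝓞 L)) hw
  have ht : algebraMap (𝓞 L) (𝓞 M) u - algebraMap (𝓞 L) (𝓞 M) t ^ n ∈ w.asIdeal := by
    rw [← map_pow, ← map_sub]; exact ht
  refine eq_bot_iff.2 fun τ hτ => ?_
  have hfix (x : 𝓞 L) : τ • algebraMap (𝓞 L) (𝓞 M) x = algebraMap (𝓞 L) (𝓞 M) x :=
    hcoe (τ.commutes x)
  have hroot (z : M) (hz : z ^ n = algebraMap L M u) : τ z = z := by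
    have hzint : IsIntegral ℤ z := .of_pow hn.bot_lt <| by
      rw [hz]; exact (RingOfIntegers.isIntegral_coe u).algebraMap
    obtain ⟨z, rfl⟩ : ∃ z' : 𝓞 M, (z' : M) = z := ⟨⟨z, hzint⟩, rfl⟩
    have hzu : z ^ n = algebraMap (𝓞 L) (𝓞 M) u := hcoe hz
    refine congrArg (algebraMap (𝓞 M) M) <| smul_eq_of_pow_sub_pow_mem (P := w.asIdeal) hn hζM hτ
      (hfix ζ) (hfix t) (by rw [hzu, hfix]) (fun hnz => hw ?_) (by rwa [hzu])
    obtain ⟨k, rfl⟩ := Nat.exists_eq_succ_of_ne_zero hn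
    rw [map_mul, map_natCast, ← hzu, pow_succ', ← mul_assoc]
    exact w.asIdeal.mul_mem_right _ hnz
  have hid : (τ : M →ₐ[L] M) = AlgHom.id L M :=
    AlgHom.ext_of_adjoin_eq_top (IsSplittingField.adjoin_rootSet M (X ^ n - C (u : L)))
      fun z hz => hroot z (by simpa [sub_eq_zero] using aeval_eq_zero_of_mem_rootSet hz)
  exact AlgEquiv.ext fun x => DFunLike.congr_fun hid x

open Polynomial in
lemma IsLocalPow.exists_pow_eq {L : Type*} [Field L] [NumberField L] {n : ℕ} (hn : n ≠ 0) {ζ : L}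
    (hζ : IsPrimitiveRoot ζ n) {u : 𝓞 L} (hu : IsLocalPow n u) (hu0 : u ≠ 0) :
    ∃ w : L, w ^ n = u := by
  let M := (X ^ n - C (u : L)).SplittingField
  have : NumberField M := NumberField.of_module_finite L M
  have : IsGalois L M := IsGalois.mk
  have htriv : ∀ τ : Gal(M/L), τ = 1 :=
    eq_one_of_stabilizer_eq_bot (mul_ne_zero (Nat.cast_ne_zero.2 hn) hu0)
      (stabilizer_eq_bot_of_isLocalPow hn hζ hu)
  obtain ⟨z, hz⟩ := (SplittingField.splits (X ^ n - C (u : L))).exists_eval_eq_zero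
    (by simpa [degree_X_pow_sub_C hn.bot_lt] using hn)
  obtain ⟨w, rfl⟩ := (IsGalois.mem_range_algebraMap_iff_fixed (F := L) z).2 fun τ => by
    rw [htriv τ, AlgEquiv.one_apply]
  refine ⟨w, (algebraMap L M).injective ?_⟩
  simpa [sub_eq_zero] using hz

end Kummer

section Schinzel

/-- The exponents `k` for which `u ^ k` is an `n`-th power. -/
def powExponents {A : Type*} [CommGroup A] (n : ℕ) (u : A) : AddSubgroup ℤ where
  carrier := {k | ∃ y : A, y ^ n = u ^ k}
  zero_mem' := ⟨1, by simp⟩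
  add_mem' := by
    rintro a b ⟨y, hy⟩ ⟨z, hz⟩
    exact ⟨y * z, by rw [mul_pow, hy, hz, zpow_add]⟩
  neg_mem' := by
    rintro a ⟨y, hy⟩
    exact ⟨y⁻¹, by rw [inv_pow, hy, zpow_neg]⟩

variable {K L : Type*} [Field K] [Field L] [Algebra K L] [FiniteDimensional K L]
  [IsAbelianGalois K L] {n : ℕ} [NeZero n] {ζ : L}

/-- Since `Gal(L/K)` is commutative, `σ w / w ^ a` is fixed by it; its `n`-th power is
`u ^ (1 - a)`. -/
lemma one_sub_mem_powExponents (hζ : IsPrimitiveRoot ζ n) {u : Kˣ} {w : L}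
    (hw : w ^ n = algebraMap K L u) {σ : Gal(L/K)} {a : ℕ} (hσ : σ ζ = ζ ^ a) :
    (1 - a : ℤ) ∈ powExponents n u := by
  have hu : algebraMap K L u ≠ 0 := (map_ne_zero _).2 u.ne_zero
  have hw0 : w ≠ 0 := fun h0 => hu (by rw [← hw, h0, zero_pow (NeZero.ne n)])
  have hfix (τ : Gal(L/K)) : τ (σ w / w ^ a) = σ w / w ^ a := by
    obtain ⟨b, -, hb⟩ : ∃ b < n, ζ ^ b = τ w / w := hζ.eq_pow_of_pow_eq_one <| by
      rw [div_pow, ← map_pow, hw, τ.commutes, div_self hu]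
    have hτw : τ w = ζ ^ b * w := by rw [hb, div_mul_cancel₀ _ hw0]
    have hcomm : τ (σ w) = σ (τ w) := DFunLike.congr_fun (mul_comm' τ σ) w
    rw [map_div₀, hcomm, map_pow, hτw, map_mul, map_pow, hσ, mul_pow, ← pow_mul, ← pow_mul,
      mul_comm a b, mul_div_mul_left _ _ (pow_ne_zero _ (hζ.ne_zero (NeZero.ne n)))]
  obtain ⟨y, hy⟩ := (IsGalois.mem_range_algebraMap_iff_fixed _).2 hfix
  have hy0 : y ≠ 0 := by
    rintro rfl
    simpa [hw0] using hy.symm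
  refine ⟨Units.mk0 y hy0, Units.ext ((algebraMap K L).injective ?_)⟩
  rw [Units.val_pow_eq_pow_val, Units.val_mk0, map_pow, hy, div_pow, ← map_pow, hw, σ.commutes,
    ← pow_mul, mul_comm a n, pow_mul, hw, zpow_sub]
  simp [div_eq_mul_inv]

/-- If `g` generates the group of exponents, then all of `Gal(L/K)` fixes the `g`-th roots of unity,
so `g` divides the number of roots of unity of `K`. -/
lemma torsionOrder_mem_powExponents [NumberField K] (hζ : IsPrimitiveRoot ζ n) {u : Kˣ} {w : L}
    (hw : w ^ n = algebraMap K L u) : (Units.torsionOrder K : ℤ) ∈ powExponents n u := by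
  obtain ⟨g, hg⟩ : ∃ g : ℕ, ∀ k : ℤ, k ∈ powExponents n u ↔ (g : ℤ) ∣ k := by
    obtain ⟨g, hg⟩ := Int.subgroup_cyclic (powExponents n u)
    refine ⟨g.natAbs, fun k => ?_⟩
    rw [hg, ← AddSubgroup.zmultiples_eq_closure, Int.mem_zmultiples_iff, Int.natAbs_dvd]
  obtain ⟨k, hk⟩ : g ∣ n := Int.natCast_dvd_natCast.1 <| (hg n).1 ⟨u, by rw [zpow_natCast]⟩
  have : NeZero g := ⟨fun h0 => NeZero.ne n (by rw [hk, h0, zero_mul])⟩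
  have hfix (σ : Gal(L/K)) : σ (ζ ^ k) = ζ ^ k := by
    obtain ⟨a, -, ha⟩ : ∃ a < n, ζ ^ a = σ ζ := hζ.eq_pow_of_pow_eq_one <| by
      rw [← map_pow, hζ.pow_eq_one, map_one]
    have hdvd : (n : ℤ) ∣ (1 - a) * k := by
      rw [hk, Nat.cast_mul]
      exact mul_dvd_mul_right ((hg _).1 (one_sub_mem_powExponents hζ hw ha.symm)) _
    have hone := (hζ.zpow_eq_one_iff_dvd _).2 hdvd
    rw [sub_mul, one_mul, zpow_sub₀ (hζ.ne_zero (NeZero.ne n)),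
      div_eq_one_iff_eq (zpow_ne_zero _ (hζ.ne_zero (NeZero.ne n)))] at hone
    rw [map_pow, ← ha, ← pow_mul]
    exact_mod_cast hone.symm
  obtain ⟨z, hz⟩ := (IsGalois.mem_range_algebraMap_iff_fixed _).2 hfix
  have hprim : IsPrimitiveRoot (algebraMap K L z) g :=
    hz ▸ hζ.pow (Nat.pos_of_neZero n) (hk.trans (mul_comm g k))
  exact (hg _).2 <| Int.natCast_dvd_natCast.2 <| Units.dvd_torsionOrder_of_isPrimitiveRoot <|
    hprim.of_map_of_injective (algebraMap K L).injective

lemma exists_units_pow_eq {n k : ℕ} (hn : n ≠ 0) {u : (𝓞 K)ˣ} {y : K} (hy : y ^ n = (u : K) ^ k) :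
    ∃ v : (𝓞 K)ˣ, v ^ n = u ^ k := by
  have hyint : IsIntegral ℤ y := .of_pow hn.bot_lt <| by
    rw [hy]; exact (RingOfIntegers.isIntegral_coe (u : 𝓞 K)).pow _
  obtain ⟨z, rfl⟩ : ∃ z : 𝓞 K, (z : K) = y := ⟨⟨y, hyint⟩, rfl⟩
  have hz : z ^ n = (u : 𝓞 K) ^ k := RingOfIntegers.coe_injective (by simpa using hy)
  obtain ⟨v, rfl⟩ : IsUnit z := (isUnit_pow_iff hn).1 (hz ▸ u.isUnit.pow k)
  exact ⟨v, Units.ext (by simpa using hz)⟩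

/-- Schinzel's argument applies because a local `n`-th power is an `n`-th power in `K(ζ_n)`. -/
lemma exists_units_pow_eq_pow_torsionOrder [NumberField K] {n : ℕ} (hn : n ≠ 0) {u : (𝓞 K)ˣ}
    (hu : IsLocalPow n (u : 𝓞 K)) : ∃ v : (𝓞 K)ˣ, v ^ n = u ^ Units.torsionOrder K := by
  have : NeZero n := ⟨hn⟩
  let L := CyclotomicField n K
  have : IsAbelianGalois K L := IsCyclotomicExtension.isAbelianGalois {n} K L
  have hζ := IsCyclotomicExtension.zeta_spec n K L
  obtain ⟨w, hw⟩ := (hu.map (L := L)).exists_pow_eq hn hζ (u.isUnit.map _).ne_zero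
  obtain ⟨y, hy⟩ := torsionOrder_mem_powExponents
    (u := Units.map (algebraMap (𝓞 K) K).toMonoidHom u) hζ hw
  exact exists_units_pow_eq hn (by simpa using congrArg Units.val hy)

end Schinzel

/-! ### Chevalley's theorem on units -/

lemma exists_eq_zero_of_smul_eq {M : Type*} [AddCommGroup M] [Module.Free ℤ M] (x : M) :
    ∃ m : ℤ, m ≠ 0 ∧ ∀ y : M, m • y = x → x = 0 := by
  let b := Module.Free.chooseBasis ℤ M
  by_cases hx : x = 0
  · exact ⟨1, one_ne_zero, fun _ _ => hx⟩
  obtain ⟨i, hi⟩ : ∃ i, b.repr x i ≠ 0 := by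
    by_contra! h
    exact hx (b.repr.map_eq_zero_iff.1 (Finsupp.ext h))
  refine ⟨2 * b.repr x i, mul_ne_zero two_ne_zero hi, fun y hy => absurd ?_ hi⟩
  have hcoord : 2 * b.repr x i * b.repr y i = b.repr x i := by
    conv_rhs => rw [← hy]
    simp
  have : b.repr x i * (2 * b.repr y i - 1) = 0 := by linear_combination hcoord
  exact (mul_eq_zero.1 this).resolve_right (by lia)

lemma exists_forall_eq_zero_of_smul_eq {M ι : Type*} [AddCommGroup M] [Module.Free ℤ M] [Finite ι]
    (x : ι → M) : ∃ m : ℤ, m ≠ 0 ∧ ∀ i, ∀ y : M, m • y = x i → x i = 0 := by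
  classical
  have := Fintype.ofFinite ι
  choose m hm0 hm using fun i => exists_eq_zero_of_smul_eq (x i)
  refine ⟨∏ i, m i, Finset.prod_ne_zero_iff.2 fun i _ => hm0 i, fun i y hy => ?_⟩
  refine hm i ((∏ j ∈ Finset.univ.erase i, m j) • y) ?_
  rw [← hy, smul_smul, Finset.mul_prod_erase _ _ (Finset.mem_univ i)]

section Chevalley

lemma IsLocalPow.mul_pow {R : Type*} [CommRing R] {n : ℕ} {u : R} (hu : IsLocalPow n u) (y : R) :
    IsLocalPow n (u * y ^ n) := by
  intro v hv
  obtain ⟨t, ht⟩ := hu v fun h => hv <| by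
    rw [← mul_assoc]; exact Ideal.mul_mem_right _ _ h
  refine ⟨t * y, ?_⟩
  rw [_root_.mul_pow, ← sub_mul]
  exact Ideal.mul_mem_right _ _ ht

variable {K : Type*} [Field K] [NumberField K]

/-- If the class of `a` consists of units which are not `n`-th powers modulo some prime, the norm of
that prime is a suitable `m`. -/
lemma exists_forall_dvd_isLocalPow_mul_pow (n : ℕ) (a : (𝓞 K)ˣ) : ∃ m : ℤ, m ≠ 0 ∧
    ∀ y : (𝓞 K)ˣ, (m : 𝓞 K) ∣ (a * y ^ n : (𝓞 K)ˣ) - 1 → IsLocalPow n (a * y ^ n : 𝓞 K) := by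
  by_cases ha : IsLocalPow n (a : 𝓞 K)
  · exact ⟨1, one_ne_zero, fun y _ => ha.mul_pow y⟩
  obtain ⟨v, hv⟩ : ∃ v : HeightOneSpectrum (𝓞 K), ∀ t, (a : 𝓞 K) - t ^ n ∉ v.asIdeal := by
    by_contra! h
    exact ha fun v _ => h v
  refine ⟨Ideal.absNorm v.asIdeal, mod_cast Ideal.absNorm_eq_zero_iff.not.2 v.ne_bot,
    fun y hy => absurd ?_ (hv ↑(y⁻¹))⟩
  have hmem : ((a * y ^ n : (𝓞 K)ˣ) : 𝓞 K) - 1 ∈ v.asIdeal :=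
    v.asIdeal.mem_of_dvd hy (mod_cast Ideal.absNorm_mem v.asIdeal)
  have hcalc : (a : 𝓞 K) - (y⁻¹ : (𝓞 K)ˣ) ^ n
      = (((a * y ^ n : (𝓞 K)ˣ) : 𝓞 K) - 1) * ((y ^ n)⁻¹ : (𝓞 K)ˣ) := by
    rw [sub_mul, ← Units.val_mul, mul_inv_cancel_right, one_mul, ← inv_pow,
      Units.val_pow_eq_pow_val]
  exact hcalc ▸ Ideal.mul_mem_right _ _ hmem

lemma exists_forall_dvd_isLocalPow {n : ℕ} (hn : n ≠ 0) : ∃ m : ℤ, m ≠ 0 ∧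
    ∀ u : (𝓞 K)ˣ, (m : 𝓞 K) ∣ u - 1 → IsLocalPow n (u : 𝓞 K) := by
  classical
  let Q := (𝓞 K)ˣ ⧸ (powMonoidHom n : (𝓞 K)ˣ →* (𝓞 K)ˣ).range
  have : Group.FG (𝓞 K)ˣ := Group.fg_iff_monoid_fg.2 inferInstance
  have := Subgroup.finiteIndex_range_powMonoidHom_of_fg (𝓞 K)ˣ hn
  have := Fintype.ofFinite Q
  choose m hm0 hm using fun q : Q => exists_forall_dvd_isLocalPow_mul_pow n q.out
  refine ⟨∏ q, m q, Finset.prod_ne_zero_iff.2 fun q _ => hm0 q, fun u hu => ?_⟩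
  obtain ⟨⟨_, y, rfl⟩, hy⟩ := QuotientGroup.mk_out_eq_mul (powMonoidHom n : (𝓞 K)ˣ →* _).range u
  have hu' : u = (QuotientGroup.mk u : Q).out * y⁻¹ ^ n := by
    rw [inv_pow]; exact eq_mul_inv_of_mul_eq hy.symm
  have hdvd : (m (QuotientGroup.mk u) : 𝓞 K) ∣ ((∏ q, m q : ℤ) : 𝓞 K) :=
    Int.cast_dvd_cast _ _ (Finset.dvd_prod_of_mem m (Finset.mem_univ _))
  have := hm (QuotientGroup.mk u) y⁻¹ (hu' ▸ hdvd.trans hu)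
  rwa [← Units.val_pow_eq_pow_val, ← Units.val_mul, ← hu'] at this

lemma exists_forall_torsion_eq_one : ∃ m : ℤ, m ≠ 0 ∧
    ∀ ξ ∈ Units.torsion K, (m : 𝓞 K) ∣ ξ - 1 → ξ = 1 := by
  obtain ⟨m, hm0, hm⟩ := exists_forall_eq_zero_of_smul_eq
    fun ξ : Units.torsion K => ((ξ : (𝓞 K)ˣ) : 𝓞 K) - 1
  refine ⟨m, hm0, fun ξ hξ ⟨y, hy⟩ => Units.ext <| sub_eq_zero.1 <| hm ⟨ξ, hξ⟩ y ?_⟩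
  rw [zsmul_eq_mul, hy]

lemma exists_forall_dvd_pow_sub_one {m : ℤ} (hm : m ≠ 0) : ∃ t : ℕ, t ≠ 0 ∧
    ∀ y : (𝓞 K)ˣ, (m : 𝓞 K) ∣ (y ^ t : (𝓞 K)ˣ) - 1 := by
  let I : Ideal (𝓞 K) := Ideal.span {(m : 𝓞 K)}
  have : Finite (𝓞 K ⧸ I) := I.finiteQuotientOfFreeOfNeBot <| by
    simpa only [I, ne_eq, Ideal.span_singleton_eq_bot, Int.cast_eq_zero] using hm
  refine ⟨Nat.card (𝓞 K ⧸ I)ˣ, Nat.card_pos.ne', fun y => ?_⟩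
  have hpow : Units.map (Ideal.Quotient.mk I).toMonoidHom y ^ Nat.card (𝓞 K ⧸ I)ˣ = 1 :=
    pow_card_eq_one'
  rw [← Ideal.mem_span_singleton, ← Ideal.Quotient.eq_zero_iff_mem, map_sub, map_one, sub_eq_zero]
  exact congrArg Units.val ((map_pow _ _ _).trans hpow)

/-- A unit close to `1` satisfies `u ^ w = y ^ (t k w)`, where `w` is the number of roots of unity,
so it differs from the `k`-th power `y ^ (t k)` by a root of unity. For a suitable `t` that root of
unity is close to `1` as well, hence trivial. -/
theorem exists_forall_dvd_exists_eq_pow {k : ℕ} (hk : k ≠ 0) : ∃ m : ℤ, m ≠ 0 ∧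
    ∀ u : (𝓞 K)ˣ, (m : 𝓞 K) ∣ u - 1 → ∃ y : (𝓞 K)ˣ, u = y ^ k := by
  let w := Units.torsionOrder K
  have hw : w ≠ 0 := Units.torsionOrder_ne_zero K
  obtain ⟨m₀, hm₀, htors⟩ := exists_forall_torsion_eq_one (K := K)
  obtain ⟨t, ht0, ht⟩ := exists_forall_dvd_pow_sub_one (K := K) hm₀
  have hn : t * k * w ≠ 0 := mul_ne_zero (mul_ne_zero ht0 hk) hw
  obtain ⟨m₁, hm₁, hloc⟩ := exists_forall_dvd_isLocalPow (K := K) hn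
  refine ⟨m₀ * m₁, mul_ne_zero hm₀ hm₁, fun u hu => ?_⟩
  rw [Int.cast_mul] at hu
  obtain ⟨y, hy⟩ := exists_units_pow_eq_pow_torsionOrder hn (hloc u (dvd_of_mul_left_dvd hu))
  refine ⟨y ^ t, ?_⟩
  have hyt : (y ^ k) ^ t = (y ^ t) ^ k := pow_right_comm y k t
  have hξ : u / (y ^ k) ^ t ∈ Units.torsion K := by
    refine (CommGroup.mem_torsion _).2 (isOfFinOrder_iff_pow_eq_one.2 ⟨w, hw.bot_lt, ?_⟩)
    rw [div_pow, ← hy, hyt, ← pow_mul, ← pow_mul, mul_assoc, div_self']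
  have hdvd : (m₀ : 𝓞 K) ∣ (u / (y ^ k) ^ t : (𝓞 K)ˣ) - 1 := by
    have := (dvd_sub (dvd_of_mul_right_dvd hu) (ht (y ^ k))).mul_right
      ((((y ^ k) ^ t)⁻¹ : (𝓞 K)ˣ) : 𝓞 K)
    rwa [sub_sub_sub_cancel_right, sub_mul, ← Units.val_mul, ← Units.val_mul, mul_inv_cancel,
      ← div_eq_mul_inv] at this
  exact (div_eq_one.1 (htors _ hξ hdvd)).trans hyt

end Chevalley

end NumberFields

/-! ### The congruence subgroup property -/

section Pure

variable {R M : Type*} [CommRing R] [AddCommGroup M] [Module R M]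

/-- A submodule is pure if the quotient by it is torsion-free. -/
def IsPure (W : Submodule R M) : Prop :=
  ∀ ⦃c : R⦄ ⦃x : M⦄, c ≠ 0 → c • x ∈ W → x ∈ W

lemma isPure_ker [IsDomain R] {N : Type*} [AddCommGroup N] [Module R N] [Module.IsTorsionFree R N]
    (f : M →ₗ[R] N) : IsPure (LinearMap.ker f) := fun c x hc hx => by
  rw [LinearMap.mem_ker, map_smul] at hx
  exact (smul_eq_zero.1 hx).resolve_left hc

lemma IsPure.compatibleMaps {W : Submodule R M} (hW : IsPure W) :
    IsPure (W.compatibleMaps W) := fun _ _ hc hf _ hx => hW hc (hf hx)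

lemma IsPure.free_quotient [IsDomain R] [IsPrincipalIdealRing R] [Module.Finite R M]
    {W : Submodule R M} (hW : IsPure W) : Module.Free R (M ⧸ W) := by
  have : Module.IsTorsionFree R (M ⧸ W) := by
    refine Module.isTorsionFree_iff_smul_eq_zero.2 fun c x hcx => or_iff_not_imp_left.2 fun hc => ?_
    obtain ⟨x, rfl⟩ := Submodule.Quotient.mk_surjective W x
    rw [← Submodule.Quotient.mk_smul, Submodule.Quotient.mk_eq_zero] at hcx
    exact (Submodule.Quotient.mk_eq_zero W).2 (hW hc hcx)
  infer_instance

end Pure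

section FiniteIndex

variable {G : Type*} [Group G]

lemma finiteIndex_of_finite_range {X : Type*} {H : Subgroup G} {f : G → X}
    (hf : (Set.range f).Finite) (h : ∀ a b, f a = f b → a⁻¹ * b ∈ H) : H.FiniteIndex := by
  have : Finite (Set.range f) := hf.to_subtype
  have : Finite (G ⧸ H) := by
    refine Finite.of_injective (fun q : G ⧸ H => (⟨f q.out, _, rfl⟩ : Set.range f))
      fun a b hab => ?_
    rw [← Quotient.out_eq a, ← Quotient.out_eq b]
    exact QuotientGroup.eq.2 (h _ _ (congrArg Subtype.val hab))
  exact Subgroup.finiteIndex_of_finite_quotient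

lemma exists_forall_pow_mem (H : Subgroup G) [H.FiniteIndex] : ∃ e ≠ 0, ∀ g : G, g ^ e ∈ H :=
  ⟨H.normalCore.index, Subgroup.FiniteIndex.index_ne_zero, fun g =>
    H.normalCore_le (H.normalCore.pow_index_mem g)⟩

lemma finite_torsion_of_fg (A : Type*) [CommGroup A] [Group.FG A] :
    Finite (CommGroup.torsion A) := by
  have : Module.Finite ℤ (Additive A) := Module.Finite.iff_addGroup_fg.2 inferInstance
  have : Finite (Submodule.torsion ℤ (Additive A)).toAddSubgroup :=
    Module.finite_of_fg_torsion (Submodule.torsion ℤ (Additive A)) Submodule.torsion_isTorsion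
  rwa [Submodule.torsion_int] at this

lemma exists_forall_pow_mem_of_pow_mem {A : Type*} [CommGroup A] [Group.FG A] (H : Subgroup A) :
    ∃ k ≠ 0, ∀ (y : A) (n : ℕ), n ≠ 0 → y ^ n ∈ H → y ^ k ∈ H := by
  have : Finite (CommGroup.torsion (A ⧸ H)) := finite_torsion_of_fg _
  refine ⟨Nat.card (CommGroup.torsion (A ⧸ H)), Nat.card_pos.ne', fun y n hn hy => ?_⟩
  have htors : (y : A ⧸ H) ∈ CommGroup.torsion (A ⧸ H) :=
    (CommGroup.mem_torsion _).2 <| isOfFinOrder_iff_pow_eq_one.2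
      ⟨n, hn.bot_lt, (QuotientGroup.eq_one_iff _).2 hy⟩
  exact (QuotientGroup.eq_one_iff _).1 <|
    congrArg Subtype.val (pow_card_eq_one' (x := (⟨y, htors⟩ : CommGroup.torsion (A ⧸ H))))

end FiniteIndex

section CongruenceProperty

variable {Γ E E' : Type*} [Group Γ] [Ring E] [Ring E']

/-- The principal congruence subgroup of level `m` with respect to an action `ρ` of a group on a
ring, or through endomorphisms of a lattice: the elements with `ρ g ≡ 1` modulo `m`. -/
def levelSubgroup (ρ : Γ →* E) (m : ℤ) : Subgroup Γ where
  carrier := {g | (m : E) ∣ ρ g - 1}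
  one_mem' := by simp
  mul_mem' {a b} ha hb := by
    have : ρ (a * b) - 1 = (ρ a - 1) * ρ b + (ρ b - 1) := by rw [map_mul]; noncomm_ring
    exact (congrArg _ this).mpr (dvd_add (ha.mul_right _) hb)
  inv_mem' {a} ha := by
    have : ρ a⁻¹ - 1 = -((ρ a - 1) * ρ a⁻¹) := by
      rw [sub_mul, ← map_mul, mul_inv_cancel, map_one, one_mul, neg_sub]
    exact (congrArg _ this).mpr ((ha.mul_right _).neg_right)

lemma mem_levelSubgroup {ρ : Γ →* E} {m : ℤ} {g : Γ} :
    g ∈ levelSubgroup ρ m ↔ (m : E) ∣ ρ g - 1 := Iff.rfl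

lemma levelSubgroup_anti (ρ : Γ →* E) {m m' : ℤ} (h : m ∣ m') :
    levelSubgroup ρ m' ≤ levelSubgroup ρ m := fun _ hg => (Int.cast_dvd_cast _ _ h).trans hg

lemma finiteIndex_levelSubgroup [Module.Finite ℤ E] (ρ : Γ →* E) {m : ℤ} (hm : m ≠ 0) :
    (levelSubgroup ρ m).FiniteIndex := by
  let mE : Submodule ℤ E := LinearMap.range (LinearMap.lsmul ℤ E m)
  have : Finite (E ⧸ mE) := by
    refine Module.finite_of_fg_torsion _ fun {x} => ⟨⟨m, mem_nonZeroDivisors_of_ne_zero hm⟩, ?_⟩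
    obtain ⟨x, rfl⟩ := Submodule.Quotient.mk_surjective mE x
    exact (Submodule.Quotient.mk_eq_zero mE).2 ⟨x, rfl⟩
  refine finiteIndex_of_finite_range (f := fun g => mE.mkQ (ρ g)) (Set.toFinite _) fun a b hab => ?_
  obtain ⟨x, hx⟩ := (Submodule.Quotient.eq mE).1 hab.symm
  have : ρ (a⁻¹ * b) - 1 = ρ a⁻¹ * (ρ b - ρ a) := by
    rw [mul_sub, ← map_mul, ← map_mul, inv_mul_cancel, map_one]
  refine mem_levelSubgroup.2 ⟨ρ a⁻¹ * x, ?_⟩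
  rw [this, ← hx, LinearMap.lsmul_apply, zsmul_eq_mul, ← mul_assoc, ← mul_assoc,
    (Int.cast_commute m _).eq]

/-- The congruence subgroup property of an action `ρ`: a subgroup of finite index which can be seen
through `ρ` contains a principal congruence subgroup. -/
def CongruenceProperty (ρ : Γ →* E) : Prop :=
  ∀ H : Subgroup Γ, H.FiniteIndex → ρ.ker ≤ H → ∃ m : ℤ, m ≠ 0 ∧ levelSubgroup ρ m ≤ H

lemma CongruenceProperty.of_subsingleton [Subsingleton E] (ρ : Γ →* E) : CongruenceProperty ρ :=
  fun _ _ hker => ⟨1, one_ne_zero, fun _ _ => hker (Subsingleton.elim _ _)⟩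

/-- If `H` has finite index, every `h ∈ Γ` close to `1` is congruent modulo `ρ'.ker` to an element
of `H` which is itself close to `1`; this reduces the claim to the elements of `ρ'.ker`. -/
lemma CongruenceProperty.extension [Module.Finite ℤ E] {ρ : Γ →* E} {ρ' : Γ →* E'}
    (hle : ∀ m : ℤ, m ≠ 0 → levelSubgroup ρ m ≤ levelSubgroup ρ' m) (h' : CongruenceProperty ρ')
    (hker : CongruenceProperty (ρ.comp ρ'.ker.subtype)) : CongruenceProperty ρ := by
  intro H hH hρH
  obtain ⟨q, hq0, hq⟩ := hker (H.subgroupOf ρ'.ker) inferInstance fun x hx => hρH hx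
  have : (levelSubgroup ρ q).FiniteIndex := finiteIndex_levelSubgroup ρ hq0
  obtain ⟨m, hm0, hm⟩ := h' ((H ⊓ levelSubgroup ρ q) ⊔ ρ'.ker)
    (Subgroup.finiteIndex_of_le le_sup_left) le_sup_right
  refine ⟨m * q, mul_ne_zero hm0 hq0, fun x hx => ?_⟩
  have hxq : x ∈ levelSubgroup ρ q := levelSubgroup_anti ρ (dvd_mul_left q m) hx
  have hxm : x ∈ levelSubgroup ρ' m := hle m hm0 (levelSubgroup_anti ρ (dvd_mul_right m q) hx)
  obtain ⟨h, ⟨hhH, hhq⟩, k, hk, rfl⟩ := Subgroup.mem_sup_of_normal_right.1 (hm hxm)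
  have hkq : k ∈ levelSubgroup ρ q := ((levelSubgroup ρ q).mul_mem_cancel_left hhq).1 hxq
  exact H.mul_mem hhH (hq (show (⟨k, hk⟩ : ρ'.ker) ∈ levelSubgroup _ q from hkq))

lemma CongruenceProperty.of_subgroup {ρ : Γ →* E} {Γ₀ : Subgroup Γ} {m₀ : ℤ} (hm₀ : m₀ ≠ 0)
    (hle : levelSubgroup ρ m₀ ≤ Γ₀) (h : CongruenceProperty (ρ.comp Γ₀.subtype)) :
    CongruenceProperty ρ := by
  intro H hH hker
  obtain ⟨m, hm0, hm⟩ := h (H.subgroupOf Γ₀) inferInstance fun x hx => hker hx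
  refine ⟨m₀ * m, mul_ne_zero hm₀ hm0, fun x hx => ?_⟩
  have hx₀ : x ∈ Γ₀ := hle (levelSubgroup_anti ρ (dvd_mul_right m₀ m) hx)
  exact hm (show (⟨x, hx₀⟩ : Γ₀) ∈ levelSubgroup _ m from
    levelSubgroup_anti ρ (dvd_mul_left m m₀) hx)

/-- The representatives of the nontrivial cosets of `Γ₀` have nonzero images in the lattice `E / P`,
and a suitable `m` divides none of these images. -/
lemma exists_levelSubgroup_le_of_isPure [Module.Finite ℤ E] {ρ : Γ →* E} {P : Submodule ℤ E}
    (hP : IsPure P) {Γ₀ : Subgroup Γ} [Γ₀.FiniteIndex] (hΓ₀ : ∀ g, g ∈ Γ₀ ↔ ρ g ∈ P) :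
    ∃ m : ℤ, m ≠ 0 ∧ levelSubgroup ρ m ≤ Γ₀ := by
  have := hP.free_quotient
  obtain ⟨m, hm0, hm⟩ := exists_forall_eq_zero_of_smul_eq fun q : Γ ⧸ Γ₀ => P.mkQ (ρ q.out)
  refine ⟨m, hm0, fun g hg => ?_⟩
  obtain ⟨⟨h, hh⟩, hgh⟩ := QuotientGroup.mk_out_eq_mul Γ₀ g⁻¹
  obtain ⟨x, hx⟩ : (m : E) ∣ ρ (g * (g⁻¹ * h)) - ρ (g⁻¹ * h) := by
    rw [map_mul, ← sub_one_mul]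
    exact Dvd.dvd.mul_right hg _
  rw [mul_inv_cancel_left] at hx
  have hzero : P.mkQ (ρ (g⁻¹ * h)) = 0 := by
    rw [← hgh]
    refine hm _ (P.mkQ (-x)) ?_
    rw [hgh, ← map_smul, smul_neg, zsmul_eq_mul, ← hx, neg_sub, map_sub, sub_eq_self]
    exact (Submodule.Quotient.mk_eq_zero P).2 ((hΓ₀ h).1 hh)
  have hmem : g⁻¹ * h ∈ Γ₀ := (hΓ₀ _).2 ((Submodule.Quotient.mk_eq_zero P).1 hzero)
  exact Γ₀.inv_mem_iff.1 ((Γ₀.mul_mem_cancel_right hh).1 hmem)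

/-- For a group acting through a finitely generated abelian group `A`, all `k`-th powers of `A`
some power of which comes from `H` come from `H`, for a suitable `k`. -/
lemma CongruenceProperty.of_pow {A : Type*} [CommGroup A] [Group.FG A] {ρ : Γ →* E} (δ : Γ →* A)
    (hδ : δ.ker ≤ ρ.ker) (hpow : ∀ k : ℕ, k ≠ 0 → ∃ m : ℤ, m ≠ 0 ∧
      ∀ g ∈ levelSubgroup ρ m, ∃ y, δ g = y ^ k) : CongruenceProperty ρ := by
  intro H hH hker
  obtain ⟨e, he, hHe⟩ := exists_forall_pow_mem H
  obtain ⟨k, hk, hHk⟩ := exists_forall_pow_mem_of_pow_mem (H.map δ)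
  obtain ⟨m, hm0, hm⟩ := hpow k hk
  refine ⟨m, hm0, fun g hg => ?_⟩
  obtain ⟨y, hy⟩ := hm g hg
  obtain ⟨h, hh, hhy⟩ : δ g ∈ H.map δ := by
    rw [hy]
    refine hHk y (k * e) (mul_ne_zero hk he) ?_
    rw [pow_mul, ← hy, ← map_pow]
    exact Subgroup.mem_map_of_mem δ (hHe g)
  have : h⁻¹ * g ∈ δ.ker := by rw [MonoidHom.mem_ker, map_mul, map_inv, hhy, inv_mul_cancel]
  exact (H.mul_mem_cancel_left (H.inv_mem hh)).1 (hker (hδ this))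

/-- Here `g ↦ ρ g - 1` is a homomorphism to the finitely generated abelian group `E`. -/
lemma CongruenceProperty.of_unipotent [Module.Finite ℤ E] {ρ : Γ →* E}
    (h : ∀ a b, (ρ a - 1) * (ρ b - 1) = 0) : CongruenceProperty ρ := by
  let δ : Γ →* Multiplicative E :=
    { toFun g := .ofAdd (ρ g - 1)
      map_one' := by rw [map_one, sub_self, ofAdd_zero]
      map_mul' a b := by
        have : ρ (a * b) - 1 = (ρ a - 1) * (ρ b - 1) + (ρ a - 1) + (ρ b - 1) := by
          rw [map_mul]; noncomm_ring
        rw [this, h, zero_add, ofAdd_add] }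
  have : AddGroup.FG E := Module.Finite.iff_addGroup_fg.1 inferInstance
  refine .of_pow δ (fun g hg => sub_eq_zero.1 hg) fun k hk =>
    ⟨k, Nat.cast_ne_zero.2 hk, fun g ⟨x, hx⟩ => ⟨.ofAdd x, ?_⟩⟩
  rw [← ofAdd_nsmul, nsmul_eq_mul, ← Int.cast_natCast, ← hx]
  rfl

end CongruenceProperty

section InvariantSubmodule

variable {Γ L : Type*} [Group Γ] [AddCommGroup L] {W : Submodule ℤ L}

lemma IsPure.le_comap_of_intCast_mul (hW : IsPure W) {m : ℤ} (hm : m ≠ 0) {f : Module.End ℤ L}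
    (h : W ≤ W.comap ((m : Module.End ℤ L) * f)) : W ≤ W.comap f := fun x hx => hW hm <| by
  simpa only [← zsmul_eq_mul, Submodule.mem_comap, LinearMap.smul_apply] using h hx

lemma IsPure.le_comap_of_levelSubgroup (hW : IsPure W) {ρ : Representation ℤ Γ L} {m : ℤ}
    (hm : m ≠ 0) {g : Γ} (hg : W ≤ W.comap (ρ g)) {f : Module.End ℤ L}
    (hf : ρ g - 1 = (m : Module.End ℤ L) * f) : W ≤ W.comap f :=
  hW.le_comap_of_intCast_mul hm fun _ hx => hf ▸ W.sub_mem (hg hx) hx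

lemma IsPure.levelSubgroup_le_subrepresentation (hW : IsPure W) {ρ : Representation ℤ Γ L}
    (hρ : ∀ g, W ≤ W.comap (ρ g)) {m : ℤ} (hm : m ≠ 0) :
    levelSubgroup ρ m ≤ levelSubgroup (ρ.subrepresentation W hρ) m := by
  rintro g ⟨f, hf⟩
  refine ⟨f.restrict (hW.le_comap_of_levelSubgroup hm (hρ g) hf), ?_⟩
  ext x
  simpa [← zsmul_eq_mul] using LinearMap.congr_fun hf x

lemma IsPure.levelSubgroup_le_quotient (hW : IsPure W) {ρ : Representation ℤ Γ L}
    (hρ : ∀ g, W ≤ W.comap (ρ g)) {m : ℤ} (hm : m ≠ 0) :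
    levelSubgroup ρ m ≤ levelSubgroup (ρ.quotient W hρ) m := by
  rintro g ⟨f, hf⟩
  refine ⟨W.mapQ W f (hW.le_comap_of_levelSubgroup hm (hρ g) hf), ?_⟩
  ext x
  simpa [← zsmul_eq_mul] using congrArg W.mkQ (LinearMap.congr_fun hf x)

/-- The elements acting trivially on both `W` and `L / W` are unipotent. -/
lemma CongruenceProperty.of_isPure [Module.Finite ℤ L] [Module.Free ℤ L]
    {ρ : Representation ℤ Γ L} (hW : IsPure W) (hρ : ∀ g, W ≤ W.comap (ρ g))
    (hsub : CongruenceProperty (ρ.subrepresentation W hρ))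
    (hquot : CongruenceProperty
      ((ρ.quotient W hρ).comp (ρ.subrepresentation W hρ).ker.subtype)) :
    CongruenceProperty ρ := by
  refine .extension (fun _ => hW.levelSubgroup_le_subrepresentation hρ) hsub ?_
  refine .extension (fun m hm g hg => hW.levelSubgroup_le_quotient hρ hm hg) hquot ?_
  refine .of_unipotent fun ⟨⟨a, ha⟩, _⟩ ⟨_, hb⟩ => LinearMap.ext fun x => ?_
  have hbW := (Submodule.Quotient.eq W).1 (LinearMap.congr_fun hb (W.mkQ x))
  exact sub_eq_zero.2 (congrArg Subtype.val (LinearMap.congr_fun ha ⟨_, hbW⟩))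

end InvariantSubmodule

section OrdersInNumberFields

open NumberField nonZeroDivisors

lemma numberField_of_isFractionRing (R K : Type*) [CommRing R] [IsDomain R] [CharZero R]
    [Module.Finite ℤ R] [Field K] [Algebra R K] [IsFractionRing R K] : NumberField K := by
  have : CharZero K := IsFractionRing.charZero_of_isFractionRing R
  exact { to_finiteDimensional := Module.Finite.of_isLocalization ℤ R ℤ⁰ }

lemma exists_ringHom_ringOfIntegers_injective (R K : Type*) [CommRing R] [Algebra.IsIntegral ℤ R]
    [Field K] [Algebra R K] [FaithfulSMul R K] :
    ∃ ι : R →+* 𝓞 K, Function.Injective ι := by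
  let ι : R →ₐ[ℤ] 𝓞 K := IsIntegralClosure.lift ℤ (𝓞 K) K
  have hι (r : R) : algebraMap (𝓞 K) K (ι r) = algebraMap R K r :=
    IsIntegralClosure.algebraMap_lift ℤ (𝓞 K) K r
  exact ⟨ι, fun a b hab => FaithfulSMul.algebraMap_injective R K <|
    (hι a).symm.trans ((congrArg (algebraMap (𝓞 K) K) hab).trans (hι b))⟩

variable {R Γ : Type*} [CommRing R] [Group Γ]

lemma CongruenceProperty.of_isDomain [IsDomain R] [CharZero R] [Module.Finite ℤ R]
    (ψ : Γ →* R) : CongruenceProperty ψ := by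
  let K := FractionRing R
  have : NumberField K := numberField_of_isFractionRing R K
  obtain ⟨ι, hι⟩ := exists_ringHom_ringOfIntegers_injective R K
  have : Group.FG (𝓞 K)ˣ := Group.fg_iff_monoid_fg.2 inferInstance
  refine .of_pow ((ι : R →* _).comp ψ).toHomUnits
    (fun g hg => hι ((congrArg Units.val hg).trans ι.map_one.symm)) fun k hk => ?_
  obtain ⟨m, hm0, hm⟩ := exists_forall_dvd_exists_eq_pow (K := K) hk
  refine ⟨m, hm0, fun g hg => hm _ ?_⟩
  have : ι m ∣ ι (ψ g - 1) := map_dvd ι hg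
  rwa [map_intCast, map_sub, map_one] at this

lemma CongruenceProperty.of_subalgebra {E : Type*} [Ring E] {D : Subalgebra ℤ E}
    (hD : IsPure D.toSubmodule) {ψ : Γ →* D} (h : CongruenceProperty ψ) :
    CongruenceProperty ((D.val : D →* E).comp ψ) := by
  intro H hH hker
  obtain ⟨m, hm0, hm⟩ := h H hH fun g hg => hker (congrArg Subtype.val hg)
  refine ⟨m, hm0, fun g ⟨f, hf⟩ => hm ⟨⟨f, hD hm0 ?_⟩, Subtype.ext hf⟩⟩
  rw [zsmul_eq_mul, ← hf]
  exact (ψ g - 1).2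

end OrdersInNumberFields

/-! ### Irreducible solvable groups of automorphisms of a lattice -/

section Commutants

open Polynomial IsMulCommutative

lemma finite_of_isNilpotent_sub_imp_eq {R : Type*} [CommRing R] [IsNoetherianRing R] {p : ℤ[X]}
    (hp : p.Monic) {T : Set R} (hroot : ∀ r ∈ T, aeval r p = 0)
    (hnil : ∀ r ∈ T, ∀ s ∈ T, IsNilpotent (r - s) → r = s) : T.Finite := by
  have : Finite (minimalPrimes R) := (minimalPrimes.finite_of_isNoetherianRing R).to_subtype
  let φ (r : R) (P : minimalPrimes R) : R ⧸ P.1 := Ideal.Quotient.mkₐ ℤ P.1 r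
  refine Set.Finite.of_finite_image (f := φ) ?_ fun r hr s hs hrs => hnil r hr s hs ?_
  · have (P : minimalPrimes R) : P.1.IsPrime := Ideal.IsMinimalPrime.isPrime P.2
    refine (Set.Finite.pi fun P : minimalPrimes R => p.rootSet_finite (R ⧸ P.1)).subset ?_
    rintro _ ⟨r, hr, rfl⟩ P -
    refine mem_rootSet'.2 ⟨(hp.map _).ne_zero, ?_⟩
    rw [aeval_algHom_apply, hroot r hr, map_zero]
  · rw [← mem_nilradical, nilradical, ← Ideal.sInf_minimalPrimes, Ideal.mem_sInf]
    exact fun {P} hP => Ideal.Quotient.eq.1 (congrFun hrs ⟨P, hP⟩)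

lemma finite_of_commute_of_isNilpotent_sub_imp_eq {E : Type*} [Ring E] [Module.Finite ℤ E]
    {p : ℤ[X]} (hp : p.Monic) {T : Set E} (hcomm : ∀ x ∈ T, ∀ y ∈ T, x * y = y * x)
    (hroot : ∀ x ∈ T, aeval x p = 0)
    (hnil : ∀ x ∈ T, ∀ y ∈ T, IsNilpotent (x - y) → x = y) : T.Finite := by
  let D := Algebra.adjoin ℤ T
  have : IsMulCommutative D := Algebra.isMulCommutative_adjoin ℤ hcomm
  have : Module.Finite ℤ D := Module.Finite.of_injective D.val.toLinearMap Subtype.val_injective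
  have : IsNoetherianRing D := IsNoetherianRing.of_finite ℤ D
  have hfin : (D.val ⁻¹' T).Finite := by
    refine finite_of_isNilpotent_sub_imp_eq hp (fun x hx => Subtype.ext ?_) fun x hx y hy hxy =>
      Subtype.ext (hnil x hx y hy (hxy.map D.val))
    exact (aeval_algHom_apply D.val x p).symm.trans (hroot x hx)
  refine (hfin.image D.val).subset fun x hx => ⟨⟨x, Algebra.subset_adjoin hx⟩, hx, rfl⟩

lemma isPure_centralizer {E : Type*} [Ring E] [Module.IsTorsionFree ℤ E] (s : Set E) :
    IsPure (Subalgebra.centralizer ℤ s).toSubmodule := fun c x hc hx y hy => by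
  have := hx y hy
  rw [mul_smul_comm, smul_mul_assoc] at this
  exact (smul_right_inj hc).1 this

end Commutants

section Conjugation

variable {Γ E : Type*} [Group Γ] [Ring E] {ρ : Γ →* E}

/-- The action of a group on a ring by conjugation with the values of `ρ`. -/
def conjAut (ρ : Γ →* E) : Γ →* RingAut E :=
  (MulSemiringAction.toRingAut (ConjAct Eˣ) E).comp
    (ConjAct.toConjAct.toMonoidHom.comp ρ.toHomUnits)

lemma conjAut_apply (ρ : Γ →* E) (g : Γ) (x : E) : conjAut ρ g x = ρ g * x * ρ g⁻¹ := rfl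

lemma conjAut_apply_map (ρ : Γ →* E) (g h : Γ) : conjAut ρ g (ρ h) = ρ (g * h * g⁻¹) := by
  rw [conjAut_apply, ← map_mul, ← map_mul]

lemma conjAut_eq_self_iff {g : Γ} {x : E} : conjAut ρ g x = x ↔ Commute (ρ g) x := by
  rw [conjAut_apply]
  exact (ρ.toHomUnits g).mul_inv_eq_iff_eq_mul

lemma aeval_conjAut (g : Γ) {x : E} {p : Polynomial ℤ} (hx : p.aeval x = 0) :
    p.aeval (conjAut ρ g x) = 0 := by
  have := p.aeval_algHom_apply (conjAut ρ g : E →+* E).toIntAlgHom x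
  rwa [hx, map_zero] at this

lemma conjAut_mem_centralizer {s : Set E} (hs : ∀ g, ∀ x ∈ s, conjAut ρ g x ∈ s) {x : E}
    (hx : x ∈ s.centralizer) (g : Γ) : conjAut ρ g x ∈ s.centralizer := fun y hy => by
  obtain ⟨z, rfl⟩ := (conjAut ρ g).surjective y
  have hz : z ∈ s := by
    have := hs g⁻¹ _ hy
    rwa [← RingAut.mul_apply, ← map_mul, inv_mul_cancel, map_one] at this
  rw [← map_mul, hx z hz, map_mul]

/-- The elements whose image under `ρ` commutes with all elements of `s`. -/
def centralizerComap (ρ : Γ →* E) (s : Set E) : Subgroup Γ where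
  carrier := {g | ρ g ∈ s.centralizer}
  one_mem' := by simp
  mul_mem' ha hb := by
    change ρ _ ∈ s.centralizer
    exact map_mul ρ _ _ ▸ Set.mul_mem_centralizer ha hb
  inv_mem' {a} ha x hx :=
    Commute.units_inv_right (u := ρ.toHomUnits a) (ha x hx)

lemma normal_centralizerComap {s : Set E} (hs : ∀ g, ∀ x ∈ s, conjAut ρ g x ∈ s) :
    (centralizerComap ρ s).Normal where
  conj_mem a ha g := by
    have := conjAut_mem_centralizer hs ha g
    rwa [conjAut_apply_map] at this

lemma finiteIndex_centralizerComap_singleton {x : E}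
    (hx : (Set.range fun g => conjAut ρ g x).Finite) :
    (centralizerComap ρ {x}).FiniteIndex := by
  refine finiteIndex_of_finite_range hx fun a b hab => ?_
  have : conjAut ρ (a⁻¹ * b) x = x := by
    rw [map_mul, RingAut.mul_apply, ← hab, ← RingAut.mul_apply, ← map_mul, inv_mul_cancel, map_one,
      RingAut.one_apply]
  rintro _ rfl
  exact (conjAut_eq_self_iff.1 this).symm

/-- The elements whose image under `ρ` is central in the image of `ρ`. -/
def imageCenter (ρ : Γ →* E) : Subgroup Γ := centralizerComap ρ (Set.range ρ)

/-- Passing to a subgroup of finite index does not enlarge the centralizer of the image. -/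
def HasStableCentralizer (ρ : Γ →* E) : Prop :=
  ∀ C : Subgroup Γ, C.FiniteIndex → (ρ '' C).centralizer ⊆ (Set.range ρ).centralizer

lemma exists_hasStableCentralizer [Module.Finite ℤ E] (ρ : Γ →* E) :
    ∃ B : Subgroup Γ, B.FiniteIndex ∧ HasStableCentralizer (ρ.comp B.subtype) := by
  have : IsNoetherian ℤ E := isNoetherian_of_isNoetherianRing_of_finite ℤ E
  let commutant (B : Subgroup Γ) := (Subalgebra.centralizer ℤ (ρ '' B)).toSubmodule
  obtain ⟨-, ⟨⟨B, hB, rfl⟩, hmax⟩⟩ := exists_maximal_of_wellFoundedGT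
    (fun V => ∃ B : Subgroup Γ, B.FiniteIndex ∧ commutant B = V) ⟨_, ⊤, inferInstance, rfl⟩
  refine ⟨B, hB, fun C hC => ?_⟩
  have hle : commutant B ≤ commutant (C.map B.subtype) :=
    Set.centralizer_subset (Set.image_mono (Subgroup.map_subtype_le C))
  have : (C.map B.subtype).FiniteIndex := ⟨by
    rw [Subgroup.index_map_subtype]
    exact mul_ne_zero hC.index_ne_zero hB.index_ne_zero⟩
  have hge := hmax ⟨C.map B.subtype, this, rfl⟩ hle
  rw [MonoidHom.coe_comp, Set.image_comp, Set.range_comp, B.coe_subtype, Subtype.range_coe]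
  exact hge

lemma HasStableCentralizer.commute_of_finite (hρ : HasStableCentralizer ρ) {x : E}
    (hx : (Set.range fun g => conjAut ρ g x).Finite) (g : Γ) : Commute (ρ g) x := by
  refine hρ _ (finiteIndex_centralizerComap_singleton hx) ?_ _ ⟨g, rfl⟩
  rintro _ ⟨h, hh, rfl⟩
  exact (hh x rfl).symm

lemma finiteIndex_imageCenter_of_finite [Module.Finite ℤ E]
    (h : ∀ c, (Set.range fun g => conjAut ρ g (ρ c)).Finite) : (imageCenter ρ).FiniteIndex := by
  obtain ⟨B, hB, hst⟩ := exists_hasStableCentralizer ρ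
  refine Subgroup.finiteIndex_of_le (H := B) fun b hb => ?_
  rintro _ ⟨c, rfl⟩
  have := hst.commute_of_finite ((h c).subset
    (Set.range_comp_subset_range B.subtype fun g => conjAut ρ g (ρ c))) ⟨b, hb⟩
  exact this.symm

end Conjugation

section Irreducible

open Polynomial IsMulCommutative

variable {Γ L : Type*} [Group Γ] [AddCommGroup L]

/-- Irreducibility over `ℚ` of a set of endomorphisms of a lattice: the invariant subspaces of
`ℚ ⊗ L` correspond to the pure invariant submodules of `L`. -/
def IsRationallyIrreducible (s : Set (Module.End ℤ L)) : Prop :=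
  ∀ W : Submodule ℤ L, IsPure W → (∀ f ∈ s, W ≤ W.comap f) → W = ⊥ ∨ W = ⊤

variable [Module.Free ℤ L]

lemma IsRationallyIrreducible.injective {s : Set (Module.End ℤ L)}
    (hs : IsRationallyIrreducible s) {x : Module.End ℤ L} (hx : x ∈ s.centralizer) (h0 : x ≠ 0) :
    Function.Injective x := by
  refine LinearMap.ker_eq_bot.1 ((hs _ (isPure_ker x) fun f hf v hv => ?_).resolve_right
    fun h => h0 (LinearMap.ker_eq_top.1 h))
  have : f (x v) = x (f v) := LinearMap.congr_fun (hx f hf) v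
  rw [Submodule.mem_comap, LinearMap.mem_ker, ← this, LinearMap.mem_ker.1 hv, map_zero]

lemma IsRationallyIrreducible.eq_zero_of_mul_eq_zero {s : Set (Module.End ℤ L)}
    (hs : IsRationallyIrreducible s) {x y : Module.End ℤ L} (hx : x ∈ s.centralizer) (h0 : x ≠ 0)
    (hxy : x * y = 0) : y = 0 :=
  LinearMap.ext fun v => hs.injective hx h0 <| (LinearMap.congr_fun hxy v).trans (map_zero x).symm

lemma IsRationallyIrreducible.eq_zero_of_isNilpotent {s : Set (Module.End ℤ L)}
    (hs : IsRationallyIrreducible s) {x : Module.End ℤ L} (hx : x ∈ s.centralizer)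
    (hnil : IsNilpotent x) : x = 0 := by
  by_contra h0
  obtain ⟨k, hk⟩ := hnil
  induction k with
  | zero => exact h0 (by rw [← one_mul x, ← pow_zero x, hk, zero_mul])
  | succ k ih => exact ih (hs.eq_zero_of_mul_eq_zero hx h0 (by rw [← pow_succ', hk]))

lemma IsRationallyIrreducible.isDomain [Nontrivial L] {s : Set (Module.End ℤ L)}
    (hs : IsRationallyIrreducible s) {D : Subalgebra ℤ (Module.End ℤ L)}
    (hD : (D : Set (Module.End ℤ L)) ⊆ s.centralizer) : IsDomain D := by
  have : NoZeroDivisors D := ⟨fun {x y} hxy => or_iff_not_imp_left.2 fun hx => Subtype.ext <|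
    hs.eq_zero_of_mul_eq_zero (hD x.2) (Subtype.coe_ne_coe.2 hx) (congrArg Subtype.val hxy)⟩
  exact NoZeroDivisors.to_isDomain D

lemma exists_ne_zero_forall_isNilpotent_apply_eq_zero {D : Subalgebra ℤ (Module.End ℤ L)}
    [IsMulCommutative D] [Module.Finite ℤ L] [Nontrivial L] :
    ∃ v : L, v ≠ 0 ∧ ∀ x ∈ D, IsNilpotent x → x v = 0 := by
  have : IsNoetherian ℤ (Module.End ℤ L) := isNoetherian_of_isNoetherianRing_of_finite ℤ _
  have : Module.Finite ℤ D := Module.Finite.of_injective D.val.toLinearMap Subtype.val_injective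
  have : IsNoetherianRing D := IsNoetherianRing.of_finite ℤ D
  obtain ⟨P, hP⟩ := associatedPrimes.nonempty D L
  obtain ⟨hprime, v, hv⟩ := isAssociatedPrime_iff.1 hP
  refine ⟨v, fun h0 => hprime.ne_top ?_, fun x hx hnil => ?_⟩
  · rw [hv, Ideal.eq_top_iff_one, Submodule.mem_colon_singleton, h0, smul_zero]
    exact zero_mem _
  · have hnil' : IsNilpotent (⟨x, hx⟩ : D) :=
      (IsNilpotent.map_iff (f := D.val) Subtype.val_injective).1 (show IsNilpotent x from hnil)
    have := nilpotent_iff_mem_prime.1 hnil' P hprime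
    rwa [hv, Submodule.mem_colon_singleton, Submodule.mem_bot] at this

variable [Module.Finite ℤ L] {ρ : Γ →* Module.End ℤ L}

/-- The vectors killed by all nilpotent elements of the commutative algebra generated by `s` form
a nonzero invariant subspace. -/
lemma eq_zero_of_isNilpotent_of_mem_adjoin (hirr : IsRationallyIrreducible (Set.range ρ))
    {s : Set (Module.End ℤ L)} (hs : ∀ g, ∀ x ∈ s, conjAut ρ g x ∈ s)
    (hcomm : ∀ x ∈ s, ∀ y ∈ s, x * y = y * x) {x : Module.End ℤ L}
    (hx : x ∈ Algebra.adjoin ℤ s) (hnil : IsNilpotent x) : x = 0 := by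
  let D := Algebra.adjoin ℤ s
  have : IsMulCommutative D := Algebra.isMulCommutative_adjoin ℤ hcomm
  have hconj (g : Γ) : D ≤ D.comap (conjAut ρ g : Module.End ℤ L →+* _).toIntAlgHom :=
    Algebra.adjoin_le fun y hy => Algebra.subset_adjoin (hs g y hy)
  let V : Submodule ℤ L := ⨅ y ∈ {y ∈ D | IsNilpotent y}, LinearMap.ker y
  have mem_V {v : L} : v ∈ V ↔ ∀ y ∈ D, IsNilpotent y → y v = 0 := by
    simp [V, and_imp]
  cases subsingleton_or_nontrivial L
  · exact Subsingleton.elim _ _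
  obtain ⟨v, hv0, hv⟩ := exists_ne_zero_forall_isNilpotent_apply_eq_zero (D := D)
  have hV : V = ⊤ := by
    refine (hirr V ?_ ?_).resolve_left fun h => hv0 ((Submodule.mem_bot ℤ).1 (h ▸ mem_V.2 hv))
    · exact fun c v hc hv => mem_V.2 fun y hy hn => isPure_ker y hc (mem_V.1 hv y hy hn)
    · rintro _ ⟨g, rfl⟩ v hv
      refine mem_V.2 fun y hy hn => ?_
      have hyv : (ρ g⁻¹ * y * ρ g⁻¹⁻¹) v = 0 :=
        mem_V.1 hv _ (hconj g⁻¹ hy) (hn.map (conjAut ρ g⁻¹))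
      have := congrArg (ρ g) hyv
      rwa [inv_inv, map_zero, ← Module.End.mul_apply, ← mul_assoc, ← mul_assoc,
        ← map_mul, mul_inv_cancel, map_one, one_mul] at this
  exact LinearMap.ext fun v => mem_V.1 (hV ▸ Submodule.mem_top) x hx hnil

lemma le_imageCenter_of_commute (hirr : IsRationallyIrreducible (Set.range ρ))
    (hst : HasStableCentralizer ρ) {A : Subgroup Γ} [A.Normal]
    (hA : ∀ a ∈ A, ∀ b ∈ A, Commute (ρ a) (ρ b)) : A ≤ imageCenter ρ := by
  have hconj (g) : ∀ x ∈ ρ '' A, conjAut ρ g x ∈ ρ '' A := by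
    rintro _ ⟨a, ha, rfl⟩
    exact ⟨_, Subgroup.Normal.conj_mem ‹_› a ha g, (conjAut_apply_map ρ g a).symm⟩
  have hcomm : ∀ x ∈ ρ '' A, ∀ y ∈ ρ '' A, x * y = y * x := by
    rintro _ ⟨a, ha, rfl⟩ _ ⟨b, hb, rfl⟩
    exact hA a ha b hb
  rintro a ha _ ⟨g, rfl⟩
  obtain ⟨p, hp, hroot⟩ := Algebra.IsIntegral.isIntegral (R := ℤ) (ρ a)
  have hmem : (Set.range fun g => conjAut ρ g (ρ a)) ⊆ ρ '' A := by
    rintro _ ⟨g, rfl⟩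
    exact hconj g _ ⟨a, ha, rfl⟩
  refine hst.commute_of_finite (finite_of_commute_of_isNilpotent_sub_imp_eq hp
    (fun x hx y hy => hcomm x (hmem hx) y (hmem hy)) ?_ fun x hx y hy hxy => sub_eq_zero.1 <|
      eq_zero_of_isNilpotent_of_mem_adjoin hirr hconj hcomm
        (sub_mem (Algebra.subset_adjoin (hmem hx)) (Algebra.subset_adjoin (hmem hy))) hxy) g
  rintro _ ⟨g, rfl⟩
  exact aeval_conjAut g hroot

/-- The difference of two such multiples `z * c` and `z' * c` is not nilpotent, because `z - z'`
is not. -/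
lemma finite_central_multiples (hirr : IsRationallyIrreducible (Set.range ρ)) (c : Γ) {p : ℤ[X]}
    (hp : p.Monic) :
    ((fun z => ρ (z * c)) '' (imageCenter ρ) ∩ {x | aeval x p = 0}).Finite := by
  refine finite_of_commute_of_isNilpotent_sub_imp_eq hp ?_ (fun x hx => hx.2) ?_
  · rintro _ ⟨⟨z, hz, rfl⟩, -⟩ _ ⟨⟨z', hz', rfl⟩, -⟩
    have comm {z} (hz : z ∈ imageCenter ρ) (g : Γ) : Commute (ρ z) (ρ g) := (hz _ ⟨g, rfl⟩).symm
    simp only [map_mul]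
    exact ((comm hz _).mul_right (comm hz c)).mul_left
      ((comm hz' c).symm.mul_right (Commute.refl _))
  · rintro _ ⟨⟨z, hz, rfl⟩, -⟩ _ ⟨⟨z', hz', rfl⟩, -⟩ hnil
    have hsub : ρ z - ρ z' ∈ Subring.centralizer (Set.range ρ) := sub_mem hz hz'
    have hcomm : Commute (ρ z - ρ z') (ρ c) := (hsub _ ⟨c, rfl⟩).symm
    simp only [map_mul] at hnil ⊢
    rw [← sub_mul, ((Group.isUnit c).map ρ).isNilpotent_mul_unit_of_commute_iff hcomm] at hnil
    rw [sub_eq_zero.1 (hirr.eq_zero_of_isNilpotent hsub hnil)]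

lemma le_imageCenter_of_finiteIndex_subgroupOf (hirr : IsRationallyIrreducible (Set.range ρ))
    (hst : HasStableCentralizer ρ) {B : Subgroup Γ} [B.Normal]
    [((imageCenter ρ).subgroupOf B).FiniteIndex] : B ≤ imageCenter ρ := by
  rintro c hc _ ⟨g, rfl⟩
  obtain ⟨p, hp, hroot⟩ := Algebra.IsIntegral.isIntegral (R := ℤ) (ρ c)
  refine hst.commute_of_finite ((Set.finite_iUnion fun q : B ⧸ (imageCenter ρ).subgroupOf B =>
    finite_central_multiples hirr (q.out : Γ) hp).subset ?_) g
  rintro _ ⟨g, rfl⟩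
  let d : B := ⟨g * c * g⁻¹, Subgroup.Normal.conj_mem ‹_› c hc g⟩
  let r : B := (d : B ⧸ (imageCenter ρ).subgroupOf B).out
  have hz : ((r⁻¹ * d : B) : Γ) ∈ imageCenter ρ :=
    Subgroup.mem_subgroupOf.1 (QuotientGroup.eq.1 (Quotient.out_eq _))
  refine Set.mem_iUnion.2 ⟨d, ⟨(r⁻¹ * d : B), hz, ?_⟩, aeval_conjAut g hroot⟩
  calc ρ ((r⁻¹ * d : B) * r) = ρ r * ρ (r⁻¹ * d : B) := by rw [map_mul, hz _ ⟨r, rfl⟩]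
    _ = conjAut ρ g (ρ c) := by
      rw [← map_mul, ← B.coe_mul, mul_inv_cancel_left, conjAut_apply_map]

lemma le_imageCenter_of_commutator_le (hirr : IsRationallyIrreducible (Set.range ρ))
    (hst : HasStableCentralizer ρ) {B : Subgroup Γ} [hB : B.Normal]
    (hcomm : ⁅B, B⁆ ≤ imageCenter ρ) : B ≤ imageCenter ρ := by
  have hfin : (imageCenter (ρ.comp B.subtype)).FiniteIndex := by
    refine finiteIndex_imageCenter_of_finite fun c => ?_
    obtain ⟨p, hp, hroot⟩ := Algebra.IsIntegral.isIntegral (R := ℤ) (ρ c)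
    refine (finite_central_multiples hirr (c : Γ) hp).subset ?_
    rintro _ ⟨b, rfl⟩
    refine ⟨⟨_, hcomm (Subgroup.commutator_mem_commutator b.2 c.2), ?_⟩,
      aeval_conjAut (ρ := ρ) (b : Γ) hroot⟩
    exact (congrArg ρ (inv_mul_cancel_right _ _)).trans (conjAut_apply_map ρ (b : Γ) c).symm
  have hnormal : (centralizerComap ρ (ρ '' B)).Normal := normal_centralizerComap <| by
    rintro g _ ⟨b, hb, rfl⟩
    exact ⟨_, hB.conj_mem b hb g, (conjAut_apply_map ρ g b).symm⟩
  have hle : B ⊓ centralizerComap ρ (ρ '' B) ≤ imageCenter ρ :=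
    le_imageCenter_of_commute hirr hst fun a ha b hb => hb.2 _ ⟨a, ha.1, rfl⟩
  have : ((imageCenter ρ).subgroupOf B).FiniteIndex := by
    refine Subgroup.finiteIndex_of_le (H := imageCenter (ρ.comp B.subtype)) fun a ha => ?_
    refine hle ⟨a.2, ?_⟩
    rintro _ ⟨b, hb, rfl⟩
    exact ha _ ⟨⟨b, hb⟩, rfl⟩
  exact le_imageCenter_of_finiteIndex_subgroupOf hirr hst

lemma commute_of_isSolvable [Group.IsSolvable Γ] (hirr : IsRationallyIrreducible (Set.range ρ))
    (hst : HasStableCentralizer ρ) (a b : Γ) : Commute (ρ a) (ρ b) := by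
  obtain ⟨n, hn⟩ := Group.IsSolvable.solvable (G := Γ)
  have key : derivedSeries Γ 0 ≤ imageCenter ρ :=
    Nat.decreasingInduction (motive := fun k _ => derivedSeries Γ k ≤ imageCenter ρ)
      (fun k _ ih => le_imageCenter_of_commutator_le hirr hst ih) (hn ▸ bot_le) n.zero_le
  exact key (Subgroup.mem_top b) _ ⟨a, rfl⟩

lemma exists_finiteIndex_forall_commute (S : Subgroup Γ) [Group.IsSolvable S] [S.FiniteIndex]
    (hirr : ∀ C : Subgroup Γ, C.FiniteIndex → IsRationallyIrreducible (ρ '' C)) :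
    ∃ B : Subgroup Γ, B.FiniteIndex ∧ ∀ a ∈ B, ∀ b ∈ B, Commute (ρ a) (ρ b) := by
  obtain ⟨B, hB, hst⟩ := exists_hasStableCentralizer (ρ.comp S.subtype)
  have hBS : (B.map S.subtype).FiniteIndex := ⟨by
    rw [Subgroup.index_map_subtype]
    exact mul_ne_zero hB.index_ne_zero Subgroup.FiniteIndex.index_ne_zero⟩
  have hirrB : IsRationallyIrreducible (Set.range ((ρ.comp S.subtype).comp B.subtype)) := by
    convert hirr _ hBS
    simp [Set.range_comp, Set.image_image]
  refine ⟨_, hBS, ?_⟩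
  rintro _ ⟨a, ha, rfl⟩ _ ⟨b, hb, rfl⟩
  exact commute_of_isSolvable hirrB hst ⟨a, ha⟩ ⟨b, hb⟩

lemma CongruenceProperty.of_isRationallyIrreducible [Nontrivial L] (S : Subgroup Γ)
    [Group.IsSolvable S] [S.FiniteIndex]
    (hirr : ∀ C : Subgroup Γ, C.FiniteIndex → IsRationallyIrreducible (ρ '' C)) :
    CongruenceProperty ρ := by
  obtain ⟨B, hB, hcomm⟩ := exists_finiteIndex_forall_commute S hirr
  let s : Set (Module.End ℤ L) := ρ '' B
  let D : Subalgebra ℤ (Module.End ℤ L) := Subalgebra.centralizer ℤ s.centralizer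
  have hs : s ⊆ s.centralizer := by
    rintro _ ⟨a, ha, rfl⟩ _ ⟨b, hb, rfl⟩
    exact hcomm b hb a ha
  have hDs : (D : Set (Module.End ℤ L)) ⊆ s.centralizer := Set.centralizer_subset hs
  have : IsMulCommutative D := .of_setLike_mul_comm fun x hx y hy => hy x (hDs hx)
  have : IsDomain D := (hirr B hB).isDomain hDs
  have : IsAddTorsionFree L := Module.isTorsionFree_int_iff_isAddTorsionFree.1 inferInstance
  have : CharZero D := .of_isAddTorsionFree D L
  have : IsNoetherian ℤ (Module.End ℤ L) := isNoetherian_of_isNoetherianRing_of_finite ℤ _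
  have : Module.Finite ℤ D := Module.Finite.of_injective D.val.toLinearMap Subtype.val_injective
  let Γ₀ := centralizerComap ρ s.centralizer
  have : Γ₀.FiniteIndex := Subgroup.finiteIndex_of_le (H := B) fun b hb =>
    Set.subset_centralizer_centralizer ⟨b, hb, rfl⟩
  have hD : IsPure D.toSubmodule := isPure_centralizer _
  obtain ⟨m, hm0, hm⟩ := exists_levelSubgroup_le_of_isPure hD (Γ₀ := Γ₀) fun _ => Iff.rfl
  exact .of_subgroup hm0 hm <| .of_subalgebra hD (.of_isDomain
    ((ρ.comp Γ₀.subtype).codRestrict D fun g => g.2))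

end Irreducible

/-! ### Soluble-by-finite groups -/

section SolubleByFinite

/-- A group is soluble-by-finite if it has a solvable subgroup of finite index. -/
def IsSolubleByFinite (Γ : Type*) [Group Γ] : Prop :=
  ∃ S : Subgroup Γ, Group.IsSolvable S ∧ S.FiniteIndex

lemma IsSolubleByFinite.subgroup {Γ : Type*} [Group Γ] (h : IsSolubleByFinite Γ)
    (Δ : Subgroup Γ) : IsSolubleByFinite Δ := by
  obtain ⟨S, hS, hfin⟩ := h
  exact ⟨S.subgroupOf Δ, Group.isSolvable_of_isSolvable_injective
    (f := Δ.subtype.subgroupComap S) fun a b hab => Subtype.ext <| Subtype.ext <|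
      congrArg (Subtype.val : S → Γ) hab, inferInstance⟩

lemma exists_subgroup_toSubmonoid_eq {Γ : Type*} [Group Γ] {M : Submonoid Γ} {C : Subgroup Γ}
    [C.FiniteIndex] (hC : C.toSubmonoid ≤ M) : ∃ N : Subgroup Γ, N.toSubmonoid = M := by
  obtain ⟨e, he, hpow⟩ := exists_forall_pow_mem C
  obtain ⟨k, rfl⟩ := Nat.exists_eq_succ_of_ne_zero he
  refine ⟨{ M with inv_mem' := fun {g} hg => ?_ }, rfl⟩
  have : g⁻¹ = g ^ k * (g ^ (k + 1))⁻¹ := by rw [pow_succ', mul_inv_rev, mul_inv_cancel_left]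
  exact this ▸ M.mul_mem (M.pow_mem hg k) (hC (C.inv_mem (hpow g)))

universe u v

variable {Γ : Type u} {L : Type v} [Group Γ] [AddCommGroup L] [Module.Finite ℤ L] [Module.Free ℤ L]

lemma IsPure.exists_forall_levelSubgroup_le_comap {W : Submodule ℤ L} (hW : IsPure W)
    {ρ : Γ →* Module.End ℤ L} {C : Subgroup Γ} [C.FiniteIndex]
    (hC : ∀ g ∈ C, W ≤ W.comap (ρ g)) :
    ∃ m : ℤ, m ≠ 0 ∧ ∀ g ∈ levelSubgroup ρ m, W ≤ W.comap (ρ g) := by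
  let M : Submonoid Γ :=
    { carrier := {g | W ≤ W.comap (ρ g)}
      one_mem' := fun x hx => by rwa [Submodule.mem_comap, map_one]
      mul_mem' := fun {a b} ha hb x hx => by
        rw [Submodule.mem_comap, map_mul]
        exact ha (hb hx) }
  obtain ⟨N, hN⟩ := exists_subgroup_toSubmonoid_eq (M := M) hC
  have mem_N (g : Γ) : g ∈ N ↔ ρ g ∈ W.compatibleMaps W := SetLike.ext_iff.1 hN g
  have : N.FiniteIndex := Subgroup.finiteIndex_of_le (H := C) fun g hg => (mem_N g).2 (hC g hg)
  obtain ⟨m, hm0, hm⟩ := exists_levelSubgroup_le_of_isPure hW.compatibleMaps mem_N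
  exact ⟨m, hm0, fun g hg => (mem_N g).1 (hm hg)⟩

theorem IsSolubleByFinite.congruenceProperty (hΓ : IsSolubleByFinite Γ)
    (ρ : Γ →* Module.End ℤ L) : CongruenceProperty ρ := by
  induction hr : Module.finrank ℤ L using Nat.strong_induction_on generalizing Γ L with
  | _ r ih =>
    subst hr
    cases subsingleton_or_nontrivial L
    · exact .of_subsingleton ρ
    by_cases hirr : ∀ C : Subgroup Γ, C.FiniteIndex → IsRationallyIrreducible (ρ '' C)
    · obtain ⟨S, hS, hfin⟩ := hΓ
      exact .of_isRationallyIrreducible S hirr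
    simp only [IsRationallyIrreducible, not_forall, not_or, Set.forall_mem_image] at hirr
    obtain ⟨C, hC, W, hW, hWC, hbot, htop⟩ := hirr
    obtain ⟨m, hm0, hm⟩ := hW.exists_forall_levelSubgroup_le_comap fun g hg => hWC hg
    have := hW.free_quotient
    have : Nontrivial W := Submodule.nontrivial_iff_ne_bot.2 hbot
    have : Nontrivial (L ⧸ W) := Submodule.Quotient.nontrivial_iff.2 htop
    have hrank := W.finrank_quotient_add_finrank
    have hpos : 0 < Module.finrank ℤ W := Module.finrank_pos
    have hpos' : 0 < Module.finrank ℤ (L ⧸ W) := Module.finrank_pos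
    refine .of_subgroup hm0 le_rfl (.of_isPure hW (fun g => hm g g.2) ?_ ?_)
    · exact ih _ (by omega) (hΓ.subgroup _) _ rfl
    · exact ih _ (by omega) ((hΓ.subgroup _).subgroup _) _ rfl

end SolubleByFinite

section StandardRepresentation

variable {n : ℕ}

/-- The action of `GL_n(ℤ)` on the lattice `ℤ ^ n`. -/
def latticeAction (n : ℕ) :
    Matrix.GeneralLinearGroup (Fin n) ℤ →* Module.End ℤ (Fin n → ℤ) :=
  (Matrix.toLinAlgEquiv' : Matrix (Fin n) (Fin n) ℤ ≃ₐ[ℤ] _).toMonoidHom.comp (Units.coeHom _)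

lemma latticeAction_injective : Function.Injective (latticeAction n) :=
  Matrix.toLinAlgEquiv'.injective.comp Units.val_injective

lemma congruenceSubgroup_le_levelSubgroup (m : ℤ) :
    congruenceSubgroup n m ≤ levelSubgroup (latticeAction n) m := fun g hg => by
  choose f hf using hg
  have : (g : Matrix (Fin n) (Fin n) ℤ) - 1 = m * Matrix.of f := by
    ext i j
    rw [hf, ← zsmul_eq_mul, Matrix.smul_apply, Matrix.of_apply, smul_eq_mul]
  refine ⟨Matrix.toLinAlgEquiv' (Matrix.of f), ?_⟩
  have := congrArg Matrix.toLinAlgEquiv' this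
  rwa [map_sub, map_one, map_mul, map_intCast] at this

end StandardRepresentation

/-- Every finite-index subgroup of a soluble-by-finite subgroup `G` of `GL_n(ℤ)` contains
`G ∩ K_m` for some nonzero `m`, where `K_m` is the principal congruence subgroup of
level `m`. -/
theorem finiteIndex_subgroup_contains_congruence
    (n : ℕ) (G : Subgroup (Matrix.GeneralLinearGroup (Fin n) ℤ))
    (hsbf : ∃ S : Subgroup ↥G, IsSolvable ↥S ∧ S.FiniteIndex)
    (H : Subgroup ↥G) (hH : H.FiniteIndex) :
    ∃ m : ℤ, m ≠ 0 ∧ (congruenceSubgroup n m).subgroupOf G ≤ H := by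
  have hG : IsSolubleByFinite G := hsbf
  let ρ := (latticeAction n).comp G.subtype
  have hinj : Function.Injective ρ := latticeAction_injective.comp G.subtype_injective
  have hker : ρ.ker ≤ H := (MonoidHom.ker_eq_bot_iff ρ).2 hinj ▸ bot_le
  obtain ⟨m, hm0, hm⟩ := hG.congruenceProperty ρ H hH hker
  exact ⟨m, hm0, fun g hg => hm (congruenceSubgroup_le_levelSubgroup m hg)⟩
end

section
/- Let G be a finitely generated nilpotent group and φ : G → G an endomorphism that induces the identity on the abelianization, i.e., φ(g)G' = gG' for all g ∈ G, where G' = [G,G]. Then φ is an automorphism of G. -/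
/-!
An IA-endomorphism `φ` acts trivially on every factor `γₙ / γₙ₊₁` of the lower central series: if
`φ a = c a` and `φ b = d b` with `a ∈ γₙ`, `c ∈ γₙ₊₁` and `d ∈ G'`, then `⁅c a, d b⁆` and `⁅a, b⁆`
differ by conjugates of commutators that lie in `γₙ₊₂`, because `⁅γᵢ, γⱼ⁆ ≤ γᵢ₊ⱼ₊₁` (indexing from
`γ₀ = G`). Hence an element of `ker φ` descends through all the `γₙ`, while
`g = (φ g * g⁻¹)⁻¹ * φ g` shows that `γₙ₊₁ ≤ φ(G)` implies `γₙ ≤ φ(G)`. As some `γₘ` is trivial,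
`φ` is bijective.
-/

section

open Subgroup
open scoped commutatorElement

variable {G H : Type*} [Group G] [Group H]

lemma commutator_commutator_le_of_rotate {H₁ H₂ H₃ N : Subgroup G} [N.Normal]
    (h₁ : ⁅⁅H₂, H₃⁆, H₁⁆ ≤ N) (h₂ : ⁅⁅H₃, H₁⁆, H₂⁆ ≤ N) : ⁅⁅H₁, H₂⁆, H₃⁆ ≤ N := by
  have map_eq_bot (K : Subgroup G) : K.map (QuotientGroup.mk' N) = ⊥ ↔ K ≤ N := by
    rw [Subgroup.map_eq_bot_iff, QuotientGroup.ker_mk']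
  simp only [← map_eq_bot, map_commutator] at h₁ h₂ ⊢
  exact commutator_commutator_eq_bot_of_rotate h₁ h₂

lemma commutator_lowerCentralSeries_le (S : Subgroup G) [S.Normal] (m n : ℕ) :
    ⁅S.lowerCentralSeries m, S.lowerCentralSeries n⁆ ≤ S.lowerCentralSeries (m + n + 1) := by
  induction m generalizing n with
  | zero => rw [S.lowerCentralSeries_zero, commutator_comm, zero_add, S.lowerCentralSeries_succ]
  | succ m ih =>
    rw [S.lowerCentralSeries_succ]
    apply commutator_commutator_le_of_rotate
    · rw [commutator_comm S, ← S.lowerCentralSeries_succ, commutator_comm, add_right_comm m 1 n]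
      exact ih (n + 1)
    · rw [commutator_comm (S.lowerCentralSeries n), add_right_comm m 1 n]
      exact commutator_mono (ih n) le_rfl

lemma commutatorElement_mul_inv_commutatorElement_mem {N : Subgroup G} [N.Normal] {a a' b b' : G}
    (ha : ∀ x : G, ⁅a' * a⁻¹, x⁆ ∈ N) (hb : ⁅a, b' * b⁻¹⁆ ∈ N) (hab : ∀ x : G, ⁅x, ⁅a, b⁆⁆ ∈ N) :
    ⁅a', b'⁆ * ⁅a, b⁆⁻¹ ∈ N := by
  have expand : ⁅a', b'⁆ * ⁅a, b⁆⁻¹ =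
      ⁅a' * a⁻¹, ⁅a, b'⁆⁆ * ⁅a, b' * b⁻¹⁆ * ⁅b' * b⁻¹, ⁅a, b⁆⁆ *
        (⁅a, b⁆ * ⁅a' * a⁻¹, b'⁆ * ⁅a, b⁆⁻¹) := by
    simp only [commutatorElement_def]
    group
  rw [expand]
  exact mul_mem (mul_mem (mul_mem (ha _) hb) (hab _)) (‹N.Normal›.conj_mem _ (ha _) _)

lemma mem_eqLocus_mk'_comp_iff {f g : G →* H} {N : Subgroup H} [N.Normal] {x : G} :
    x ∈ ((QuotientGroup.mk' N).comp f).eqLocus ((QuotientGroup.mk' N).comp g) ↔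
      f x * (g x)⁻¹ ∈ N := by
  rw [← div_eq_mul_inv]
  exact QuotientGroup.eq_iff_div_mem

lemma map_mul_inv_mem_lowerCentralSeries_succ {f g : G →* H}
    (hfg : ∀ x, f x * (g x)⁻¹ ∈ commutator H) (n : ℕ) :
    ∀ x ∈ (⊤ : Subgroup G).lowerCentralSeries n,
      f x * (g x)⁻¹ ∈ (⊤ : Subgroup H).lowerCentralSeries (n + 1) := by
  induction n with
  | zero => exact fun x _ ↦ hfg x
  | succ n ih =>
    -- Congruence modulo `γₙ₊₂` holds on a subgroup, so it can be tested on commutators.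
    simp only [← mem_eqLocus_mk'_comp_iff, ← SetLike.le_def]
    rw [Subgroup.lowerCentralSeries_succ, commutator_le]
    intro a ha b _
    have hga : g a ∈ (⊤ : Subgroup H).lowerCentralSeries n := by
      have map_le : map g ((⊤ : Subgroup G).lowerCentralSeries n) ≤
          (⊤ : Subgroup H).lowerCentralSeries n :=
        (map_lowerCentralSeries ⊤ g n).trans_le (lowerCentralSeries_mono n le_top)
      exact map_le (mem_map_of_mem g ha)
    rw [mem_eqLocus_mk'_comp_iff, map_commutatorElement, map_commutatorElement]
    apply commutatorElement_mul_inv_commutatorElement_mem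
    · exact fun x ↦ commutator_mem_commutator (ih a ha) (mem_top x)
    · exact commutator_lowerCentralSeries_le ⊤ n 1 (commutator_mem_commutator hga (hfg b))
    · intro x
      rw [Subgroup.lowerCentralSeries_succ, commutator_comm]
      exact commutator_mem_commutator (mem_top x) (commutator_mem_commutator hga (mem_top _))

section Filtration

variable {φ : G →* G} {F : ℕ → Subgroup G}

lemma ker_le_of_map_mul_inv_mem (hφ : ∀ n, ∀ g ∈ F n, φ g * g⁻¹ ∈ F (n + 1))
    (h₀ : F 0 = ⊤) (n : ℕ) : φ.ker ≤ F n := by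
  induction n with
  | zero => exact h₀ ▸ le_top
  | succ n ih =>
    intro g hg
    simpa [MonoidHom.mem_ker.1 hg] using hφ n g (ih hg)

lemma le_range_of_map_mul_inv_mem (hφ : ∀ n, ∀ g ∈ F n, φ g * g⁻¹ ∈ F (n + 1))
    {m n : ℕ} (hnm : n ≤ m) (hm : F m ≤ φ.range) : F n ≤ φ.range := by
  induction hnm using Nat.decreasingInduction with
  | self => exact hm
  | of_succ n _ ih =>
    intro g hg
    have hmem : (φ g * g⁻¹)⁻¹ * φ g ∈ φ.range :=
      mul_mem (inv_mem (ih (hφ n g hg))) ⟨g, rfl⟩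
    simpa using hmem

end Filtration

theorem ia_endomorphism_is_automorphism_general [Group.IsNilpotent G] (φ : G →* G)
    (h : ∀ g : G, φ g * g⁻¹ ∈ commutator G) : Function.Bijective φ := by
  obtain ⟨m, hm⟩ := Subgroup.nilpotent_iff_lowerCentralSeries.1 ‹Group.IsNilpotent G›
  have trivial_on_factors := map_mul_inv_mem_lowerCentralSeries_succ (g := MonoidHom.id G) h
  constructor
  · rw [← MonoidHom.ker_eq_bot_iff, eq_bot_iff, ← hm]
    exact ker_le_of_map_mul_inv_mem trivial_on_factors (Subgroup.lowerCentralSeries_zero ⊤) m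
  · rw [← MonoidHom.range_eq_top, eq_top_iff, ← Subgroup.lowerCentralSeries_zero ⊤]
    exact le_range_of_map_mul_inv_mem trivial_on_factors m.zero_le (hm ▸ bot_le)

end

/-- An IA-endomorphism of a finitely generated nilpotent group (an endomorphism inducing
the identity on the abelianization) is an automorphism. -/
theorem ia_endomorphism_is_automorphism
    (G : Type*) [Group G] [Group.IsNilpotent G] (hfg : Group.FG G)
    (φ : G →* G) (h : ∀ g : G, φ g * g⁻¹ ∈ commutator G) :
    Function.Bijective φ :=
  ia_endomorphism_is_automorphism_general φ h
end
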